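/- arXiv:1805.01662 — 2 statements merged into one kernel-verified Lean document; each statement's English description precedes it below -/
import Mathlib

section
/- Let (P_k(ε) : k ≥ 1, ε > 0) be a family of stochastic matrices on S. Assume there exist l ≥ 1, scalars s > 0 and δ > 0, and matrices P̃ and P̃⁽¹⁾ such that (i) sup_{1 ≤ i ≤ (log(1/ε))^{1+δ}} ‖P_i(ε) − (P̃ + ε(i−1)P̃⁽¹⁾)‖ = O(ε²(log(1/ε))^s) as ε↓0, and (ii) sup_{k ≥ 0, ε > 0} ‖B_{k+1}(ε)B_{k+2}(ε)⋯B_{k+l}(ε)‖ < 1. Let B̃ = (P̃(x,y) : x,y ∈ C), B̃⁽¹⁾ = (P̃⁽¹⁾(x,y) : x,y ∈ C), r̃ the column vector on C with r̃(x) = r(x) + Σ_{y∈C^c} P̃(x,y)r(y), and r̃⁽¹⁾ the column vector on C with r̃⁽¹⁾(x) = Σ_{y∈C^c} P̃⁽¹⁾(x,y)r(y). Then I − B̃ is invertible and there exists w < ∞ such that δ(ε) = μ(I − B̃)^{−1} r̃ + ε μ B̃ (I − B̃)^{−2} B̃⁽¹⁾ (I − B̃)^{−1} r̃ + ε μ B̃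 (I − B̃)^{−2} r̃⁽¹⁾ + O(ε²(log(1/ε))^w) as ε↓0. -/
open Matrix Topology Filter

/-- The matrix norm ‖A‖ = max_x Σ_y |A(x,y)|. -/
noncomputable def matNorm {T : Type*} [Fintype T] (A : Matrix T T ℝ) : ℝ :=
  ⨆ x, ∑ y, |A x y|

/-- A square matrix is stochastic if all entries are nonnegative and every row sums to 1. -/
def IsStochastic {T : Type*} [Fintype T] (P : Matrix T T ℝ) : Prop :=
  (∀ x y, 0 ≤ P x y) ∧ ∀ x, ∑ y, P x y = 1

/-- The ordered product P 1 * P 2 * ⋯ * P j. -/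
noncomputable def prodP {T : Type*} [Fintype T] [DecidableEq T]
    (P : ℕ → Matrix T T ℝ) (j : ℕ) : Matrix T T ℝ :=
  ((List.range j).map fun i => P (i + 1)).prod

/-- Principal submatrix of P corresponding to "C to C" transitions. -/
def subB {S : Type*} (C : Set S) (P : Matrix S S ℝ) : Matrix C C ℝ :=
  Matrix.of fun x y => P x.1 y.1

/-- The column vector on C with entries r(x) + Σ_{y ∈ Cᶜ} P(x,y) r(y). -/
noncomputable def rC {S : Type*} [Fintype S] (C : Set S) [DecidablePred (· ∈ C)]
    (r : S → ℝ) (P : Matrix S S ℝ) : C → ℝ :=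
  fun x => r x.1 + ∑ y ∈ Finset.univ.filter (fun y => y ∉ C), P x.1 y * r y

/-- The expected reward cumulated to the hitting time of Cᶜ:
δ = Σ_{j=0}^∞ μ (B₁⋯B_j) r_{j+1}. -/
noncomputable def deltaReward {S : Type*} [Fintype S] [DecidableEq S]
    (C : Set S) [DecidablePred (· ∈ C)]
    (μ : C → ℝ) (r : S → ℝ) (P : ℕ → Matrix S S ℝ) : ℝ :=
  ∑' j : ℕ, μ ⬝ᵥ (prodP (fun k => subB C (P k)) j *ᵥ rC C r (P (j + 1)))

set_option linter.all false
set_option maxHeartbeats 1600000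
attribute [local instance] Matrix.linftyOpNormedAddCommGroup Matrix.linftyOpNormedSpace Matrix.linftyOpNormedRing Matrix.linftyOpNormedAlgebra

section
variable {T : Type*} [Fintype T] [DecidableEq T]

lemma opn_le {A : Matrix T T ℝ} {b : ℝ} (hb : 0 ≤ b) (h : ∀ x, ∑ y, |A x y| ≤ b) : ‖A‖ ≤ b := by
  rw [Matrix.linfty_opNorm_def]
  lift b to NNReal using hb
  rw [NNReal.coe_le_coe]
  refine Finset.sup_le fun x _ => ?_
  rw [← NNReal.coe_le_coe]
  simpa using h x

lemma row_le (A : Matrix T T ℝ) (x : T) : ∑ y, |A x y| ≤ ‖A‖ := by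
  rw [Matrix.linfty_opNorm_def]
  have := Finset.le_sup (f := fun i => ∑ j, ‖A i j‖₊) (Finset.mem_univ x)
  rw [← NNReal.coe_le_coe] at this
  simpa using this

lemma opn_le_matNorm (A : Matrix T T ℝ) : ‖A‖ ≤ matNorm A := by
  refine opn_le (Real.iSup_nonneg fun x => Finset.sum_nonneg fun y _ => abs_nonneg _) fun x => ?_
  exact le_ciSup (f := fun x => ∑ y, |A x y|) (Set.finite_range _).bddAbove x

lemma stoch_norm {A : Matrix T T ℝ} (h : IsStochastic A) : ‖A‖ ≤ 1 := by
  refine opn_le zero_le_one fun x => ?_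
  rw [← h.2 x]
  exact (Finset.sum_congr rfl fun y _ => abs_of_nonneg (h.1 x y)).le

lemma prodP_succ' (B : ℕ → Matrix T T ℝ) (j : ℕ) : prodP B (j+1) = prodP B j * B (j+1) := by
  simp [prodP, List.range_succ]

lemma prodP_zero' (B : ℕ → Matrix T T ℝ) : prodP B 0 = 1 := by
  simp [prodP]

lemma prodP_add' (B : ℕ → Matrix T T ℝ) (m n : ℕ) :
    prodP B (m+n) = prodP B m * prodP (fun j => B (m+j)) n := by
  induction n with
  | zero => simp [prodP_zero']
  | succ n ih => rw [← add_assoc, prodP_succ', ih, prodP_succ', mul_assoc]; rfl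

lemma prodP_le_one [Nonempty T] (B : ℕ → Matrix T T ℝ) (hB : ∀ k, 1 ≤ k → ‖B k‖ ≤ 1) (j : ℕ) :
    ‖prodP B j‖ ≤ 1 := by
  induction j with
  | zero => simp [prodP_zero']
  | succ n ih =>
    rw [prodP_succ']
    exact (norm_mul_le _ _).trans (mul_le_one₀ ih (norm_nonneg _) (hB _ (by omega)))

lemma prodP_block [Nonempty T] (B : ℕ → Matrix T T ℝ) {l : ℕ} {β : ℝ} (h0 : 0 ≤ β)
    (hB : ∀ k, ‖prodP (fun j => B (k+j)) l‖ ≤ β) (q : ℕ) :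
    ‖prodP B (l*q)‖ ≤ β^q := by
  induction q with
  | zero => simp [prodP_zero']
  | succ n ih =>
    rw [Nat.mul_succ, prodP_add', pow_succ]
    exact (norm_mul_le _ _).trans (mul_le_mul ih (hB _) (norm_nonneg _) (by positivity))

/-- geometric decay -/
lemma geom_exists {β : ℝ} (hβ : β < 1) {l : ℕ} (hl : 1 ≤ l) :
    ∃ ρ K : ℝ, 0 < ρ ∧ ρ < 1 ∧ 0 < K ∧ ∀ j : ℕ, (max β (1/2))^(j/l) ≤ K * ρ^j := by
  set b := max β (1/2) with hb
  have hb0 : 0 < b := lt_of_lt_of_le (by norm_num) (le_max_right _ _)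
  have hb1 : b < 1 := max_lt hβ (by norm_num)
  have hl' : (0:ℝ) < l := by exact_mod_cast hl
  refine ⟨b^((1:ℝ)/l), b⁻¹, by positivity, Real.rpow_lt_one hb0.le hb1 (by positivity), by positivity, fun j => ?_⟩
  rw [← Real.rpow_natCast, ← Real.rpow_natCast, ← Real.rpow_mul hb0.le, ← Real.rpow_neg_one,
    ← Real.rpow_add hb0]
  refine Real.rpow_le_rpow_of_exponent_ge hb0 hb1.le ?_
  have h1 : j < l * (j/l) + l := by
    have := Nat.div_add_mod j l
    have := Nat.mod_lt j (show l > 0 by omega)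
    omega
  have h2 : (j:ℝ) < l * ((j/l : ℕ):ℝ) + l := by exact_mod_cast h1
  have : (1:ℝ)/l * j < ((j/l : ℕ):ℝ) + 1 := by
    rw [one_div, inv_mul_lt_iff₀ hl']; linarith
  linarith

lemma prodP_geom [Nonempty T] (B : ℕ → Matrix T T ℝ) {l : ℕ} {β : ℝ}
    (h1 : ∀ k, 1 ≤ k → ‖B k‖ ≤ 1)
    (hB : ∀ k, ‖prodP (fun j => B (k+j)) l‖ ≤ β) (j : ℕ) :
    ‖prodP B j‖ ≤ (max β (1/2))^(j/l) := by
  conv_lhs => rw [← Nat.div_add_mod j l]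
  rw [prodP_add']
  have h0 : 0 ≤ max β (1/2) := le_trans (by norm_num) (le_max_right _ _)
  refine (norm_mul_le _ _).trans ?_
  have := prodP_block B h0 (fun k => (hB k).trans (le_max_left _ _)) (j/l)
  have h2 := prodP_le_one (fun i => B (l*(j/l)+i)) (fun k hk => h1 _ (by omega)) (j % l)
  nlinarith [norm_nonneg (prodP B (l*(j/l))), norm_nonneg (prodP (fun i => B (l*(j/l)+i)) (j % l))]

lemma telescope (B : ℕ → Matrix T T ℝ) (R v : ℕ → T → ℝ) (N : ℕ) :
    ∑ j ∈ Finset.range N, prodP B j *ᵥ R j = v 0 - prodP B N *ᵥ v N -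
      ∑ j ∈ Finset.range N, prodP B j *ᵥ (v j - R j - B (j+1) *ᵥ v (j+1)) := by
  induction N with
  | zero => simp [prodP_zero']
  | succ n ih =>
    rw [Finset.sum_range_succ, ih, Finset.sum_range_succ, prodP_succ']
    simp only [Matrix.mulVec_sub, Matrix.mulVec_mulVec]
    abel

lemma dot_le (μ : T → ℝ) (hμ0 : ∀ x, 0 ≤ μ x) (hμ1 : ∑ x, μ x = 1) (f : T → ℝ) :
    |μ ⬝ᵥ f| ≤ ‖f‖ := by
  unfold dotProduct
  calc _ ≤ ∑ x, |μ x * f x| := Finset.abs_sum_le_sum_abs _ _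
    _ ≤ ∑ x, μ x * ‖f‖ := Finset.sum_le_sum fun x _ => by
        rw [abs_mul, abs_of_nonneg (hμ0 x)]
        exact mul_le_mul_of_nonneg_left (norm_le_pi_norm f x) (hμ0 x)
    _ = ‖f‖ := by rw [← Finset.sum_mul, hμ1, one_mul]
end

section
variable {S : Type*} [Fintype S] [DecidableEq S] (C : Set S) [DecidablePred (· ∈ C)]

lemma subB_norm (A : Matrix S S ℝ) : ‖subB C A‖ ≤ ‖A‖ := by
  refine opn_le (norm_nonneg _) fun x => le_trans ?_ (row_le A x.1)
  refine le_trans (le_of_eq (Finset.sum_subtype (Finset.univ.filter (· ∈ C)) (by simp) (fun y => |A x.1 y|)).symm) ?_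
  exact Finset.sum_le_sum_of_subset_of_nonneg (Finset.subset_univ _) (fun _ _ _ => abs_nonneg _)

/-- exit part -/
noncomputable def extV (r : S → ℝ) (A : Matrix S S ℝ) : C → ℝ :=
  fun x => ∑ y ∈ Finset.univ.filter (fun y => y ∉ C), A x.1 y * r y

lemma extV_norm (r : S → ℝ) (A : Matrix S S ℝ) : ‖extV C r A‖ ≤ ‖A‖ * ‖r‖ := by
  refine (pi_norm_le_iff_of_nonneg (by positivity)).2 fun x => ?_
  calc _ ≤ ∑ y ∈ Finset.univ.filter (fun y => y ∉ C), |A x.1 y * r y| := Finset.abs_sum_le_sum_abs _ _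
    _ ≤ ∑ y, |A x.1 y * r y| := Finset.sum_le_sum_of_subset_of_nonneg (Finset.subset_univ _) (fun _ _ _ => abs_nonneg _)
    _ ≤ ∑ y, |A x.1 y| * ‖r‖ := Finset.sum_le_sum fun y _ => by
        rw [abs_mul]
        exact mul_le_mul_of_nonneg_left (norm_le_pi_norm r y) (abs_nonneg _)
    _ ≤ ‖A‖ * ‖r‖ := by
        rw [← Finset.sum_mul]
        exact mul_le_mul_of_nonneg_right (row_le A x.1) (norm_nonneg _)

lemma subB_add (A B : Matrix S S ℝ) : subB C (A + B) = subB C A + subB C B := rfl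
lemma subB_smul (t : ℝ) (A : Matrix S S ℝ) : subB C (t • A) = t • subB C A := rfl
lemma extV_add (r : S → ℝ) (A B : Matrix S S ℝ) : extV C r (A + B) = extV C r A + extV C r B := by
  ext x; simp [extV, add_mul, Finset.sum_add_distrib]
lemma extV_smul (r : S → ℝ) (t : ℝ) (A : Matrix S S ℝ) : extV C r (t • A) = t • extV C r A := by
  ext x; simp [extV, Finset.mul_sum, mul_assoc]
lemma rC_eq (r : S → ℝ) (A : Matrix S S ℝ) : rC C r A = (fun x => r x.1) + extV C r A := rfl

lemma rC_norm (r : S → ℝ) (A : Matrix S S ℝ) (hA : ‖A‖ ≤ 1) : ‖rC C r A‖ ≤ 2 * ‖r‖ := by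
  rw [rC_eq]
  have h1 : ‖(fun x : C => r x.1)‖ ≤ ‖r‖ :=
    (pi_norm_le_iff_of_nonneg (by positivity)).2 fun x => norm_le_pi_norm r x.1
  have h2 := extV_norm C r A
  have := norm_add_le (fun x : C => r x.1) (extV C r A)
  nlinarith [norm_nonneg r]

end
section
variable {S : Type*} [Fintype S] [DecidableEq S] (C : Set S) [DecidablePred (· ∈ C)]

lemma residual_bound (r : S → ℝ) (Pt Pt1 Q : Matrix S S ℝ) (a p q : C → ℝ)
    (ha : a = rC C r Pt + subB C Pt *ᵥ a)
    (hp : p = extV C r Pt1 + subB C Pt1 *ᵥ a + subB C Pt *ᵥ p)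
    (hq : q = subB C Pt *ᵥ p + subB C Pt *ᵥ q)
    (ε D N : ℝ) (hε : 0 < ε) (hε1 : ε ≤ 1) (k : ℕ) (hk : (k:ℝ) + 1 ≤ N)
    (hD : ‖Q - (Pt + (ε * k) • Pt1)‖ ≤ D) :
    ‖(a + ε • ((k:ℝ) • p + q)) - rC C r Q - subB C Q *ᵥ (a + ε • (((k + 1 : ℕ):ℝ) • p + q))‖
      ≤ D * ‖r‖ + D * ((‖a‖ + ‖p‖ + ‖q‖) * (N + 1)) +
        ε^2 * (N * ‖subB C Pt1‖ * ((‖a‖ + ‖p‖ + ‖q‖) * (N + 1))) := by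
  set E := Q - (Pt + (ε * k) • Pt1) with hE
  have hQ : Q = Pt + (ε * k) • Pt1 + E := by rw [hE]; abel
  have hk0 : (0:ℝ) ≤ k := Nat.cast_nonneg k
  have hD0 : 0 ≤ D := (norm_nonneg _).trans hD
  set z : C → ℝ := ((k + 1 : ℕ):ℝ) • p + q with hz
  set A := ‖a‖ + ‖p‖ + ‖q‖ with hA
  have hA0 : 0 ≤ A := by positivity
  have hzn : ‖z‖ ≤ A * (N + 1) := by
    refine (norm_add_le _ _).trans ?_
    rw [norm_smul, Real.norm_of_nonneg (by positivity)]
    push_cast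
    nlinarith [norm_nonneg a, norm_nonneg p, norm_nonneg q]
  have hvn : ‖a + ε • z‖ ≤ A * (N + 1) := by
    refine (norm_add_le _ _).trans ?_
    have h1 : ‖ε • z‖ ≤ ((k:ℝ)+1) * ‖p‖ + ‖q‖ := by
      rw [norm_smul, Real.norm_of_nonneg hε.le]
      have : ‖z‖ ≤ ((k:ℝ)+1) * ‖p‖ + ‖q‖ := by
        refine (norm_add_le _ _).trans ?_
        rw [norm_smul, Real.norm_of_nonneg (by positivity)]
        push_cast; rfl
      nlinarith [norm_nonneg z]
    nlinarith [norm_nonneg a, norm_nonneg p, norm_nonneg q]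
  have key : (a + ε • ((k:ℝ) • p + q)) - rC C r Q - subB C Q *ᵥ (a + ε • z) =
      -(extV C r E) - subB C E *ᵥ (a + ε • z) - (ε^2 * k) • (subB C Pt1 *ᵥ z) := by
    rw [rC_eq, hQ]
    simp only [subB_add, subB_smul, extV_add, extV_smul, Matrix.add_mulVec, Matrix.smul_mulVec]
    rw [rC_eq] at ha
    have e1 : subB C Pt *ᵥ (a + ε • z) = subB C Pt *ᵥ a + ε • (((k:ℝ)+1) • subB C Pt *ᵥ p + subB C Pt *ᵥ q) := by
      rw [hz]; push_cast
      simp only [Matrix.mulVec_add, Matrix.mulVec_smul]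
    have e2 : subB C Pt1 *ᵥ (a + ε • z) = subB C Pt1 *ᵥ a + ε • (subB C Pt1 *ᵥ z) := by
      simp only [Matrix.mulVec_add, Matrix.mulVec_smul]
    rw [e1, e2]
    funext x
    have ha' := congrFun ha x
    have hp' := congrFun hp x
    have hq' := congrFun hq x
    simp only [Pi.add_apply, Pi.sub_apply, Pi.smul_apply, Pi.neg_apply, smul_eq_mul] at *
    linear_combination ha' + ε * k * hp' + ε * hq'
  rw [key]
  refine (norm_sub_le _ _).trans (add_le_add ((norm_sub_le _ _).trans (add_le_add ?_ ?_)) ?_)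
  · rw [norm_neg]
    exact (extV_norm C r E).trans (mul_le_mul_of_nonneg_right hD (norm_nonneg _))
  · refine (Matrix.linfty_opNorm_mulVec _ _).trans ?_
    exact mul_le_mul ((subB_norm C E).trans hD) hvn (norm_nonneg _) hD0
  · rw [norm_smul, Real.norm_of_nonneg (by positivity), mul_assoc]
    refine mul_le_mul_of_nonneg_left ?_ (by positivity)
    rw [mul_assoc]
    refine mul_le_mul (by linarith) ?_ (norm_nonneg _) (by linarith)
    refine (Matrix.linfty_opNorm_mulVec _ _).trans ?_
    exact mul_le_mul_of_nonneg_left hzn (norm_nonneg _)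

lemma core [Nonempty C] (P : ℕ → Matrix S S ℝ) (hst : ∀ k, 1 ≤ k → ‖P k‖ ≤ 1)
    (r : S → ℝ) (μ : C → ℝ) (hμ0 : ∀ x, 0 ≤ μ x) (hμ1 : ∑ x, μ x = 1)
    (Pt Pt1 : Matrix S S ℝ) (a p q : C → ℝ)
    (ha : a = rC C r Pt + subB C Pt *ᵥ a)
    (hp : p = extV C r Pt1 + subB C Pt1 *ᵥ a + subB C Pt *ᵥ p)
    (hq : q = subB C Pt *ᵥ p + subB C Pt *ᵥ q)
    (ε D ρ K : ℝ) (N : ℕ) (hε : 0 < ε) (hε1 : ε ≤ 1) (hρ0 : 0 < ρ) (hρ : ρ < 1) (hK : 0 < K)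
    (hgeo : ∀ j, ‖prodP (fun k => subB C (P k)) j‖ ≤ K * ρ^j)
    (hD : ∀ i : ℕ, 1 ≤ i → i ≤ N → ‖P i - (Pt + (ε * ((i:ℝ) - 1)) • Pt1)‖ ≤ D) :
    |deltaReward C μ r P - μ ⬝ᵥ (a + ε • q)| ≤
      N * (D * ‖r‖ + D * ((‖a‖ + ‖p‖ + ‖q‖) * ((N:ℝ) + 1)) +
        ε^2 * (N * ‖subB C Pt1‖ * ((‖a‖ + ‖p‖ + ‖q‖) * ((N:ℝ) + 1)))) +
      K * ρ^N * ((‖a‖ + ‖p‖ + ‖q‖) * ((N:ℝ) + 1)) + K * (2 * ‖r‖) * ρ^N / (1 - ρ) := by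
  set B := fun k => subB C (P k) with hB
  have hB1 : ∀ k, 1 ≤ k → ‖B k‖ ≤ 1 := fun k hk => (subB_norm C _).trans (hst k hk)
  set f : ℕ → ℝ := fun j => μ ⬝ᵥ (prodP B j *ᵥ rC C r (P (j+1))) with hf
  have hfb : ∀ j, ‖f j‖ ≤ K * (2 * ‖r‖) * ρ^j := by
    intro j
    rw [Real.norm_eq_abs]
    refine (dot_le μ hμ0 hμ1 _).trans ((Matrix.linfty_opNorm_mulVec _ _).trans ?_)
    have h1 := rC_norm C r (P (j+1)) (hst _ (by omega))
    calc _ ≤ (K * ρ^j) * (2 * ‖r‖) := mul_le_mul (hgeo j) h1 (norm_nonneg _) (by positivity)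
      _ = _ := by ring
  have hsum : Summable f := Summable.of_norm_bounded
    ((summable_geometric_of_lt_one hρ0.le hρ).mul_left _) hfb
  have htail := norm_sub_le_of_geometric_bound_of_hasSum hρ hfb hsum.hasSum N
  set v : ℕ → C → ℝ := fun k => a + ε • ((k:ℝ) • p + q) with hv
  have htel := telescope B (fun j => rC C r (P (j+1))) v N
  have hpart : ∑ j ∈ Finset.range N, f j = μ ⬝ᵥ v 0 - μ ⬝ᵥ (prodP B N *ᵥ v N) -
      ∑ j ∈ Finset.range N, μ ⬝ᵥ (prodP B j *ᵥ (v j - rC C r (P (j+1)) - B (j+1) *ᵥ v (j+1))) := by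
    have := congrArg (fun z => μ ⬝ᵥ z) htel
    simp only [dotProduct_sub, dotProduct_sum] at this
    simpa only [dotProduct_sub] using this
  have hv0 : v 0 = a + ε • q := by simp [hv]
  have hA0 : 0 ≤ ‖a‖ + ‖p‖ + ‖q‖ := by positivity
  have hvN : ‖v N‖ ≤ (‖a‖ + ‖p‖ + ‖q‖) * ((N:ℝ) + 1) := by
    refine (norm_add_le _ _).trans ?_
    have : ‖ε • ((N:ℝ) • p + q)‖ ≤ 1 * (N * ‖p‖ + ‖q‖) := by
      rw [norm_smul, Real.norm_of_nonneg hε.le]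
      refine mul_le_mul hε1 ((norm_add_le _ _).trans ?_) (norm_nonneg _) zero_le_one
      rw [norm_smul, Real.norm_of_nonneg (by positivity)]
    have hN0 : (0:ℝ) ≤ N := Nat.cast_nonneg N
    nlinarith [norm_nonneg a, norm_nonneg p, norm_nonneg q, mul_nonneg hN0 (norm_nonneg a), mul_nonneg hN0 (norm_nonneg q)]
  have h1 : |μ ⬝ᵥ (prodP B N *ᵥ v N)| ≤ K * ρ^N * ((‖a‖ + ‖p‖ + ‖q‖) * ((N:ℝ) + 1)) := by
    refine (dot_le μ hμ0 hμ1 _).trans ((Matrix.linfty_opNorm_mulVec _ _).trans ?_)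
    exact mul_le_mul (hgeo N) hvN (norm_nonneg _) (by positivity)
  have h2 : |∑ j ∈ Finset.range N, μ ⬝ᵥ (prodP B j *ᵥ (v j - rC C r (P (j+1)) - B (j+1) *ᵥ v (j+1)))|
      ≤ N * (D * ‖r‖ + D * ((‖a‖ + ‖p‖ + ‖q‖) * ((N:ℝ) + 1)) +
        ε^2 * (N * ‖subB C Pt1‖ * ((‖a‖ + ‖p‖ + ‖q‖) * ((N:ℝ) + 1)))) := by
    refine (Finset.abs_sum_le_sum_abs _ _).trans ?_
    refine (Finset.sum_le_card_nsmul _ _ _ ?_).trans (by rw [Finset.card_range, nsmul_eq_mul])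
    intro j hj
    have hj' := Finset.mem_range.1 hj
    refine (dot_le μ hμ0 hμ1 _).trans ((Matrix.linfty_opNorm_mulVec _ _).trans ?_)
    have hr := residual_bound C r Pt Pt1 (P (j+1)) a p q ha hp hq ε D N hε hε1 j
      (by exact_mod_cast hj') (by simpa using hD (j+1) (by omega) (by omega))
    refine le_trans ?_ hr
    exact mul_le_of_le_one_left (norm_nonneg _) (prodP_le_one B hB1 j)
  have hdel : deltaReward C μ r P = ∑' j, f j := rfl
  rw [hdel, ← hv0]
  rw [Real.norm_eq_abs] at htail
  rw [hpart] at htail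
  have t1 := abs_le.1 htail
  have t2 := abs_le.1 h1
  have t3 := abs_le.1 h2
  rw [abs_le]
  constructor <;> linarith [t1.1, t1.2, t2.1, t2.2, t3.1, t3.2]

end

lemma log_tendsto : Tendsto (fun ε : ℝ => Real.log (1/ε)) (𝓝[>] 0) atTop := by
  have := Real.tendsto_log_atTop.comp (tendsto_inv_nhdsGT_zero (𝕜 := ℝ))
  simpa [Function.comp_def, one_div] using this

lemma err_tendsto (c s : ℝ) :
    Tendsto (fun ε : ℝ => c * ε^2 * Real.log (1/ε)^s) (𝓝[>] 0) (𝓝 0) := by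
  have h := ((tendsto_rpow_mul_exp_neg_mul_atTop_nhds_zero s 2 (by norm_num)).comp log_tendsto).const_mul c
  rw [mul_zero] at h
  refine h.congr' ?_
  filter_upwards [self_mem_nhdsWithin] with ε hε
  have hε : 0 < ε := hε
  have : Real.exp (-2 * Real.log (1/ε)) = ε^2 := by
    rw [one_div, Real.log_inv, show -2 * -Real.log ε = Real.log ε + Real.log ε by ring, Real.exp_add, Real.exp_log hε]
    ring
  simp only [Function.comp_apply, this]
  ring

lemma eventually_small (δ ρ : ℝ) (hδ : 0 < δ) (hρ0 : 0 < ρ) (hρ : ρ < 1) :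
    ∀ᶠ ε : ℝ in 𝓝[>] 0, 0 < ε ∧ ε ≤ 1 ∧ 1 ≤ Real.log (1/ε) ∧
      ρ ^ (Real.log (1/ε) ^ (1+δ)) ≤ ε^2 := by
  have hlρ : 0 < -Real.log ρ := by
    have := Real.log_neg hρ0 hρ; linarith
  have h1 : ∀ᶠ ε : ℝ in 𝓝[>] 0, 1 ≤ Real.log (1/ε) := log_tendsto.eventually_ge_atTop 1
  have h2 : ∀ᶠ ε : ℝ in 𝓝[>] 0, 2 / (-Real.log ρ) ≤ Real.log (1/ε) ^ δ :=
    ((tendsto_rpow_atTop hδ).comp log_tendsto).eventually_ge_atTop _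
  have h3 : ∀ᶠ ε : ℝ in 𝓝[>] 0, ε ≤ 1 :=
    mem_nhdsWithin_of_mem_nhds (Iic_mem_nhds one_pos)
  filter_upwards [h1, h2, h3, self_mem_nhdsWithin] with ε h1 h2 h3 h4
  have h4 : 0 < ε := h4
  refine ⟨h4, h3, h1, ?_⟩
  have hL : 0 < Real.log (1/ε) := by linarith
  rw [Real.rpow_def_of_pos hρ0, Real.rpow_add hL, Real.rpow_one]
  have : ε^2 = Real.exp (-2 * Real.log (1/ε)) := by
    rw [one_div, Real.log_inv, show -2 * -Real.log ε = Real.log ε + Real.log ε by ring, Real.exp_add, Real.exp_log h4]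
    ring
  rw [this, Real.exp_le_exp]
  rw [div_le_iff₀ hlρ] at h2
  nlinarith

lemma isUnit_of_pow {T : Type*} [Fintype T] [DecidableEq T] (A : Matrix T T ℝ) (l : ℕ)
    (h : ‖A^l‖ < 1) : IsUnit (1 - A) := by
  have h1 : IsUnit (1 - A^l) := isUnit_one_sub_of_norm_lt_one h
  rw [← mul_neg_geom_sum, Matrix.isUnit_iff_isUnit_det, Matrix.det_mul] at h1
  rw [Matrix.isUnit_iff_isUnit_det]
  exact isUnit_of_mul_isUnit_left h1

lemma prodP_const {T : Type*} [Fintype T] [DecidableEq T] (A : Matrix T T ℝ) (l : ℕ) :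
    prodP (fun _ => A) l = A^l := by
  induction l with
  | zero => simp [prodP_zero']
  | succ n ih => rw [prodP_succ', ih, pow_succ]

lemma prodP_tendsto {T : Type*} [Fintype T] [DecidableEq T] (B : ℕ → ℝ → Matrix T T ℝ)
    (A : Matrix T T ℝ) (F : Filter ℝ) (h : ∀ k, 1 ≤ k → Tendsto (B k) F (𝓝 A)) (l : ℕ) :
    Tendsto (fun ε => prodP (fun k => B k ε) l) F (𝓝 (A^l)) := by
  induction l with
  | zero => simpa [prodP_zero'] using tendsto_const_nhds
  | succ n ih =>
    simp only [prodP_succ', pow_succ]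
    exact ih.mul (h _ (by omega))

/-- Theorem 3: first-order expansion of the expected reward cumulated to the
hitting time of Cᶜ, with error O(ε²(log(1/ε))^w) as ε ↓ 0. -/
theorem hitting_reward_first_order
    {S : Type*} [Fintype S] [Nonempty S] [DecidableEq S]
    (C : Set S) [DecidablePred (· ∈ C)] (hC : C ≠ Set.univ)
    (P : ℕ → ℝ → Matrix S S ℝ) (Pt Pt1 : Matrix S S ℝ)
    (l : ℕ) (hl : 1 ≤ l) (s δ : ℝ) (hs : 0 < s) (hδ : 0 < δ)
    (hstoch : ∀ k : ℕ, 1 ≤ k → ∀ ε : ℝ, 0 < ε → IsStochastic (P k ε))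
    (hi : ∃ c > (0:ℝ), ∃ ε₀ > (0:ℝ), ∀ ε : ℝ, 0 < ε → ε < ε₀ →
      ∀ i : ℕ, 1 ≤ i → (i : ℝ) ≤ Real.log (1/ε) ^ (1 + δ) →
        matNorm (P i ε - (Pt + (ε * ((i : ℝ) - 1)) • Pt1))
          ≤ c * ε ^ 2 * Real.log (1/ε) ^ s)
    (hii : ∃ β < (1:ℝ), ∀ k : ℕ, ∀ ε : ℝ, 0 < ε →
      matNorm (prodP (fun j => subB C (P (k + j) ε)) l) ≤ β)
    (r : S → ℝ) (μ : C → ℝ) (hμ0 : ∀ x, 0 ≤ μ x) (hμ1 : ∑ x, μ x = 1) :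
    IsUnit (1 - subB C Pt) ∧
      ∃ w : ℝ, ∃ c > (0:ℝ), ∃ ε₁ > (0:ℝ), ∀ ε : ℝ, 0 < ε → ε < ε₁ →
        |deltaReward C μ r (fun k => P k ε) -
            (μ ⬝ᵥ ((1 - subB C Pt)⁻¹ *ᵥ rC C r Pt) +
              ε * (μ ⬝ᵥ ((subB C Pt * ((1 - subB C Pt)⁻¹) ^ 2 * subB C Pt1 *
                  (1 - subB C Pt)⁻¹) *ᵥ rC C r Pt)) +
              ε * (μ ⬝ᵥ ((subB C Pt * ((1 - subB C Pt)⁻¹) ^ 2) *ᵥ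
                  fun x : C => ∑ y ∈ Finset.univ.filter (fun y => y ∉ C), Pt1 x.1 y * r y)))|
          ≤ c * ε ^ 2 * Real.log (1/ε) ^ w := by
  obtain ⟨c, hc, ε₀, hε₀, hi⟩ := hi
  obtain ⟨β, hβ, hii⟩ := hii
  have hne : Nonempty C := by
    by_contra hne
    rw [not_nonempty_iff] at hne
    simp at hμ1
  have hi' : ∀ ε : ℝ, 0 < ε → ε < ε₀ → ∀ i : ℕ, 1 ≤ i → (i : ℝ) ≤ Real.log (1/ε) ^ (1 + δ) →
      ‖P i ε - (Pt + (ε * ((i : ℝ) - 1)) • Pt1)‖ ≤ c * ε ^ 2 * Real.log (1/ε) ^ s :=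
    fun ε h1 h2 i h3 h4 => (opn_le_matNorm _).trans (hi ε h1 h2 i h3 h4)
  have hii' : ∀ k : ℕ, ∀ ε : ℝ, 0 < ε → ‖prodP (fun j => subB C (P (k + j) ε)) l‖ ≤ β :=
    fun k ε h => (opn_le_matNorm _).trans (hii k ε h)
  have hlt : ∀ᶠ ε : ℝ in 𝓝[>] 0, ε < ε₀ := mem_nhdsWithin_of_mem_nhds (Iio_mem_nhds hε₀)
  have hconv : ∀ k : ℕ, 1 ≤ k → Tendsto (fun ε => subB C (P k ε)) (𝓝[>] 0) (𝓝 (subB C Pt)) := by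
    intro k hk
    have hX : ∀ᶠ ε : ℝ in 𝓝[>] 0, (k:ℝ) ≤ Real.log (1/ε) ^ (1 + δ) :=
      ((tendsto_rpow_atTop (by linarith : 0 < 1 + δ)).comp log_tendsto).eventually_ge_atTop _
    refine tendsto_iff_norm_sub_tendsto_zero.2 ?_
    have hb : Tendsto (fun ε : ℝ => c * ε ^ 2 * Real.log (1/ε) ^ s + ε * (((k:ℝ) - 1) * ‖Pt1‖))
        (𝓝[>] 0) (𝓝 0) := by
      have h1 : Tendsto (fun ε : ℝ => ε * (((k:ℝ) - 1) * ‖Pt1‖)) (𝓝[>] 0) (𝓝 0) := by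
        have : Tendsto (fun ε : ℝ => ε * (((k:ℝ) - 1) * ‖Pt1‖)) (𝓝 0) (𝓝 (0 * (((k:ℝ) - 1) * ‖Pt1‖))) :=
          tendsto_id.mul_const _
        rw [zero_mul] at this
        exact this.mono_left nhdsWithin_le_nhds
      simpa using (err_tendsto c s).add h1
    refine squeeze_zero' (Eventually.of_forall fun _ => norm_nonneg _) ?_ hb
    filter_upwards [hX, hlt, self_mem_nhdsWithin] with ε hX hlt hpos
    have hpos : 0 < ε := hpos
    have hk1 : (1:ℝ) ≤ k := by exact_mod_cast hk
    have e : subB C (P k ε) - subB C Pt = subB C (P k ε - (Pt + (ε * ((k : ℝ) - 1)) • Pt1))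
        + (ε * ((k : ℝ) - 1)) • subB C Pt1 := by
      ext x y
      simp [subB]
      ring
    rw [e]
    refine (norm_add_le _ _).trans (add_le_add ((subB_norm C _).trans (hi' ε hpos hlt k hk hX)) ?_)
    rw [norm_smul, Real.norm_of_nonneg (mul_nonneg hpos.le (by linarith)), mul_assoc]
    exact mul_le_mul_of_nonneg_left (mul_le_mul_of_nonneg_left (subB_norm C _) (by linarith)) hpos.le
  have hpow : ‖(subB C Pt)^l‖ ≤ β := by
    refine le_of_tendsto (prodP_tendsto (fun k ε => subB C (P k ε)) _ _ hconv l).norm ?_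
    filter_upwards [self_mem_nhdsWithin] with ε hε
    simpa using hii' 0 ε hε
  have hU : IsUnit (1 - subB C Pt) := isUnit_of_pow _ l (hpow.trans_lt hβ)
  refine ⟨hU, ?_⟩
  obtain ⟨ρ, K, hρ0, hρ, hK, hgeo⟩ := geom_exists hβ hl
  have hdet := (Matrix.isUnit_iff_isUnit_det _).1 hU
  set B := subB C Pt with hB
  set G := (1 - B)⁻¹ with hG
  have hG1 : G = 1 + B * G := by
    have := Matrix.mul_nonsing_inv (1 - B) hdet
    rw [← hG, sub_mul, one_mul] at this
    rw [← this]; abel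
  have hG2 : B * G = G * B := by
    have h1 := Matrix.mul_nonsing_inv (1 - B) hdet
    have h2 := Matrix.nonsing_inv_mul (1 - B) hdet
    rw [← hG, sub_mul, one_mul] at h1
    rw [← hG, mul_sub, mul_one] at h2
    have : G - B * G = G - G * B := by rw [h1, h2]
    exact sub_right_injective this
  have hGv : ∀ f : C → ℝ, G *ᵥ f = f + B *ᵥ (G *ᵥ f) := by
    intro f
    conv_lhs => rw [hG1]
    rw [Matrix.add_mulVec, Matrix.one_mulVec, Matrix.mulVec_mulVec]
  set a := G *ᵥ rC C r Pt with ha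
  set p := G *ᵥ (extV C r Pt1 + subB C Pt1 *ᵥ a) with hp
  set q := G *ᵥ (B *ᵥ p) with hq
  have hcore := fun ε (hε : 0 < ε) => core C (fun k => P k ε) (fun k hk => stoch_norm (hstoch k hk ε hε))
    r μ hμ0 hμ1 Pt Pt1 a p q (hGv _) (hGv _) (hGv _)
  have htarget : ∀ ε : ℝ, μ ⬝ᵥ (a + ε • q) = μ ⬝ᵥ a +
      ε * (μ ⬝ᵥ ((B * G ^ 2 * subB C Pt1 * G) *ᵥ rC C r Pt)) +
      ε * (μ ⬝ᵥ ((B * G ^ 2) *ᵥ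
        fun x : C => ∑ y ∈ Finset.univ.filter (fun y => y ∉ C), Pt1 x.1 y * r y)) := by
    intro ε
    have hBG : G * (B * G) = B * G^2 := by rw [← mul_assoc, ← hG2, mul_assoc, pow_two]
    have e : q = (B * G^2) *ᵥ (extV C r Pt1) + (B * G ^ 2 * subB C Pt1 * G) *ᵥ rC C r Pt := by
      rw [hq, hp, ha, Matrix.mulVec_mulVec, Matrix.mulVec_mulVec, mul_assoc, hBG, Matrix.mulVec_add, Matrix.mulVec_mulVec,
        Matrix.mulVec_mulVec]
    change _ = μ ⬝ᵥ a + _ + ε * (μ ⬝ᵥ ((B * G^2) *ᵥ extV C r Pt1))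
    rw [e, dotProduct_add, dotProduct_smul, dotProduct_add, smul_eq_mul]
    ring
  set A := ‖a‖ + ‖p‖ + ‖q‖ with hA
  have hA0 : 0 ≤ A := by positivity
  have h1ρ : 0 < 1 - ρ := by linarith
  set b1 := ‖subB C Pt1‖ with hb1
  have hb10 : 0 ≤ b1 := norm_nonneg _
  have hr0 : 0 ≤ ‖r‖ := norm_nonneg _
  refine ⟨3 * (1 + δ) + s, c * ‖r‖ + 2 * c * A + 2 * b1 * A + 2 * (K * ρ⁻¹) * A
    + K * (2 * ‖r‖) * ρ⁻¹ / (1 - ρ) + 1, by positivity, ?_⟩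
  have hev := (eventually_small δ ρ hδ hρ0 hρ).and hlt
  obtain ⟨ε₁, hε₁, hev⟩ := (mem_nhdsGT_iff_exists_Ioo_subset).1 hev
  refine ⟨ε₁, hε₁, fun ε hε hεlt => ?_⟩
  obtain ⟨⟨-, hε1, hL, hsmall⟩, hεε⟩ := hev ⟨hε, hεlt⟩
  set L := Real.log (1/ε) with hLdef
  have hL0 : 0 < L := by linarith
  set X := L ^ (1 + δ) with hX
  set Y := L ^ s with hY
  have hX1 : 1 ≤ X := Real.one_le_rpow hL (by linarith)
  have hY1 : 1 ≤ Y := Real.one_le_rpow hL hs.le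
  have hw : L ^ (3 * (1 + δ) + s) = X^3 * Y := by
    rw [Real.rpow_add hL0, mul_comm 3, Real.rpow_mul hL0.le]
    norm_cast
  rw [← htarget ε, hw]
  have hNX : ((⌊X⌋₊ : ℕ):ℝ) ≤ X := Nat.floor_le (by linarith)
  have hXN : X < ((⌊X⌋₊ : ℕ):ℝ) + 1 := Nat.lt_floor_add_one X
  set N := ⌊X⌋₊ with hN
  have hmain := hcore ε hε ε (c * ε^2 * Y) ρ K N hε hε1 hρ0 hρ hK
    (fun j => (prodP_geom _ (fun k hk => (subB_norm C _).trans (stoch_norm (hstoch k hk ε hε)))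
      (fun k => hii' k ε hε) j).trans (hgeo j))
    (fun i h1 h2 => hi' ε hε hεε i h1 (le_trans (by exact_mod_cast h2) hNX))
  have hρN : ρ^N ≤ ρ⁻¹ * ε^2 := by
    rw [← Real.rpow_natCast, inv_mul_eq_div, le_div_iff₀ hρ0]
    refine le_trans ?_ hsmall
    rw [← Real.rpow_add_one hρ0.ne']
    exact Real.rpow_le_rpow_of_exponent_ge hρ0 hρ.le hXN.le
  refine hmain.trans ?_
  have hN0 : (0:ℝ) ≤ N := Nat.cast_nonneg N
  have hX0 : 0 ≤ X := by linarith
  have hY0 : 0 ≤ Y := by linarith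
  have hN2 : (N:ℝ) + 1 ≤ 2 * X := by linarith
  calc _ ≤ X * (c * ε^2 * Y * ‖r‖ + c * ε^2 * Y * (A * (2 * X)) +
        ε^2 * (X * b1 * (A * (2 * X)))) +
      K * (ρ⁻¹ * ε^2) * (A * (2 * X)) + K * (2 * ‖r‖) * (ρ⁻¹ * ε^2) / (1 - ρ) := by
        gcongr
    _ = ε^2 * (c * ‖r‖ * (X * Y) + 2 * c * A * (X^2 * Y) + 2 * b1 * A * X^3
        + 2 * (K * ρ⁻¹) * A * X + K * (2 * ‖r‖) * ρ⁻¹ / (1 - ρ) * 1) := by ring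
    _ ≤ ε^2 * (c * ‖r‖ * (X^3 * Y) + 2 * c * A * (X^3 * Y) + 2 * b1 * A * (X^3 * Y)
        + 2 * (K * ρ⁻¹) * A * (X^3 * Y) + K * (2 * ‖r‖) * ρ⁻¹ / (1 - ρ) * (X^3 * Y)) := by
        have x1 : 1 ≤ X^3 := one_le_pow₀ hX1
        have x2 : X ≤ X^3 := le_self_pow₀ hX1 (by norm_num)
        have x3 : X^2 ≤ X^3 := pow_le_pow_right₀ hX1 (by norm_num)
        have y1 : 1 ≤ X^3 * Y := one_le_mul_of_one_le_of_one_le x1 hY1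
        have y2 : X ≤ X^3 * Y := x2.trans (le_mul_of_one_le_right (by positivity) hY1)
        have y3 : X^3 ≤ X^3 * Y := le_mul_of_one_le_right (by positivity) hY1
        gcongr
    _ ≤ _ := by
        have : 0 ≤ ε^2 * (X^3 * Y) := by positivity
        linarith
end

section
/- Let n : (0,ε₀) → ℕ satisfy n(ε)/log(1/ε) → ∞ as ε↓0, let a : (0,ε₀) → (0,∞) satisfy a(ε) → ∞ as ε↓0, and set m(ε) = ⌊min(n(ε)/2, a(ε)·log(1/ε))⌋. Suppose each P_k(ε), 1 ≤ k ≤ n(ε), is stochastic, P̃ is an irreducible and aperiodic stochastic matrix with stationary distribution π̃, and there are matrices P̃⁽¹⁾, P̃⁽²⁾ with sup_{0 ≤ k ≤ m(ε)} ‖P_{n(ε)−k}(ε) − (P̃ − ε k P̃⁽¹⁾ + (ε²/2) k² P̃⁽²⁾)‖ = O(ε³ m(ε)³) as ε↓0. Then, writing Z = (I − P̃ + Π̃)^{−1}, for every probability row vector μ and column vector r: μ P_1(ε)⋯P_{n(ε)}(ε) r = π̃ r − ε π̃ P̃⁽¹⁾ Z² P̃ r + ε² π̃ P̃⁽¹⁾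 Z² P̃⁽¹⁾ Z² P̃ r + ε² ((1/2) π̃ P̃⁽²⁾ + π̃ P̃⁽¹⁾ Z P̃⁽¹⁾) [2Z³ − Z²] P̃ r + O(ε³ m(ε)⁴) as ε↓0. -/
open Matrix Topology Filter

/-- m(ε) = ⌊min(n(ε)/2, a(ε)·log(1/ε))⌋. -/
noncomputable def mcut (n : ℝ → ℕ) (a : ℝ → ℝ) (ε : ℝ) : ℕ :=
  ⌊min ((n ε : ℝ) / 2) (a ε * Real.log (1/ε))⌋₊

namespace TE

section alg
variable {R : Type*} [Ring R]

theorem sol {E Z Pt X : R} (hZP : Z * Pt = Z + E - 1) (hX : X * E = 0) :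
    X * Z * Pt = X * Z - X := by
  rw [mul_assoc, hZP, mul_sub, mul_add, hX]; simp

variable [Algebra ℝ R]

theorem poly_step {E Pt P1 P2 al be ga de ze : R}
    (h0 : E * Pt = E)
    (h1 : al * Pt - E * P1 = al)
    (h2 : (al + be) * Pt = be)
    (h3 : ga * Pt - al * P1 + (1/2 : ℝ) • (E * P2) = ga)
    (h4 : (2:ℝ) • (ga * Pt) + de * Pt - (al + be) * P1 = de)
    (h5 : (ga + de + ze) * Pt = ze) (ε k : ℝ) :
    (E + ε • ((k+1) • al + be) + ε^2 • ((k+1)^2 • ga + (k+1) • de + ze)) *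
        (Pt - (ε * k) • P1 + (ε ^ 2 / 2 * k ^ 2) • P2)
      - (E + ε • (k • al + be) + ε^2 • (k^2 • ga + k • de + ze))
    = ε^3 • ((k^2/2) • (((k+1) • al + be) * P2)
        - k • (((k+1)^2 • ga + (k+1) • de + ze) * P1))
      + (ε^4 * (k^2/2)) • (((k+1)^2 • ga + (k+1) • de + ze) * P2) := by
  simp only [mul_add, add_mul, mul_sub, smul_mul_assoc, mul_smul_comm] at *
  linear_combination (norm := module) h0 + (ε * k) • h1 + ε • h2 + (ε^2*k^2) • h3 + (ε^2 * k) • h4 + ε^2 • h5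

theorem coeffs {E Z Pt P1 P2 : R} (hPE : Pt * E = E)
    (hZE : Z * E = E)
    (hZP : Z * Pt = Z + E - 1) (hPZ : Pt * Z = Z + E - 1) (hP1 : P1 * E = 0) (hP2 : P2 * E = 0) :
    ∃ al be ga de ze : R,
    (al * Pt - E * P1 = al) ∧
    ((al + be) * Pt = be) ∧
    (ga * Pt - al * P1 + (1/2 : ℝ) • (E * P2) = ga) ∧
    ((2:ℝ) • (ga * Pt) + de * Pt - (al + be) * P1 = de) ∧
    ((ga + de + ze) * Pt = ze) ∧
    al * E = 0 ∧ be * E = 0 ∧ ga * E = 0 ∧ de * E = 0 ∧ ze * E = 0 ∧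
    be = - (E * (P1 * Z^2 * Pt)) ∧
    ze = E * (P1 * Z^2 * P1 * Z^2 * Pt) +
      ((1/2 : ℝ) • (E * P2) + E * (P1 * Z * P1)) * (((2:ℝ) • Z^3 - Z^2) * Pt) := by
  have key : ∀ X : R, X * E = 0 → X * Z * E = 0 := fun X h => by rw [mul_assoc, hZE, h]
  have keyP : ∀ X : R, X * E = 0 → X * Pt * E = 0 := fun X h => by rw [mul_assoc, hPE, h]
  have hcomm : Pt * Z = Z * Pt := by rw [hZP, hPZ]
  obtain ⟨th, hth⟩ : ∃ th : R, th = (1/2 : ℝ) • (E * P2) + E * (P1 * Z * P1) := ⟨_, rfl⟩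
  have hthE : th * E = 0 := by
    rw [hth, add_mul, smul_mul_assoc, mul_assoc E P2, hP2]; simp [mul_assoc, hP1]
  obtain ⟨al, hal⟩ : ∃ al : R, al = -(E * P1) * Z := ⟨_, rfl⟩
  have hX1 : -(E * P1) * E = 0 := by simp [mul_assoc, hP1]
  have halE : al * E = 0 := hal ▸ key _ hX1
  have hal' := sol hZP hX1
  rw [← hal] at hal'
  obtain ⟨be, hbe⟩ : ∃ be : R, be = al * Pt * Z := ⟨_, rfl⟩
  have hbeE : be * E = 0 := hbe ▸ key _ (keyP _ halE)
  have hbe' := sol hZP (keyP _ halE)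
  rw [← hbe] at hbe'
  obtain ⟨ga, hga⟩ : ∃ ga : R, ga = th * Z := ⟨_, rfl⟩
  have hgaE : ga * E = 0 := hga ▸ key _ hthE
  have hga' := sol hZP hthE
  rw [← hga] at hga'
  have hX4 : ((2:ℝ) • (ga * Pt) - (al + be) * P1) * E = 0 := by
    rw [sub_mul, smul_mul_assoc, keyP _ hgaE, mul_assoc, hP1]; simp
  obtain ⟨de, hde⟩ : ∃ de : R, de = ((2:ℝ) • (ga * Pt) - (al + be) * P1) * Z := ⟨_, rfl⟩
  have hdeE : de * E = 0 := hde ▸ key _ hX4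
  have hde' := sol hZP hX4
  rw [← hde] at hde'
  have hX5 : ((ga + de) * Pt) * E = 0 := keyP _ (by rw [add_mul, hgaE, hdeE, add_zero])
  obtain ⟨ze, hze⟩ : ∃ ze : R, ze = ((ga + de) * Pt) * Z := ⟨_, rfl⟩
  have hzeE : ze * E = 0 := hze ▸ key _ hX5
  have hze' := sol hZP hX5
  rw [← hze] at hze'
  have hab : al + be = - (E * (P1 * Z^2)) := by
    have : be = al * (Z + E - 1) := by rw [hbe, mul_assoc, hPZ]
    rw [this, mul_sub, mul_add, halE, hal]
    noncomm_ring
  refine ⟨al, be, ga, de, ze, ?_, ?_, ?_, ?_, ?_, halE, hbeE, hgaE, hdeE, hzeE, ?_, ?_⟩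
  · rw [hal']; simp
  · rw [add_mul, hbe']; simp
  · rw [hga', hth, hal]; noncomm_ring
  · rw [hde']; abel
  · rw [add_mul, hze']; abel
  · rw [hbe, mul_assoc, hcomm, hal]; noncomm_ring
  · have e1 : ze = ga * (Z * Pt) + de * (Z * Pt) := by
      rw [hze, mul_assoc, hcomm, add_mul]
    have e2 : ga * Pt = ga - th := hga'
    have e3 : th * (Z^2 * Pt) = ga * (Z * Pt) := by rw [hga]; noncomm_ring
    have e4 : th * (Z^3 * Pt) = ga * (Z * (Z * Pt)) := by rw [hga]; noncomm_ring
    have e7 : th * (((2:ℝ) • Z^3 - Z^2) * Pt) = (2:ℝ) • (th * (Z^3 * Pt)) - th * (Z^2 * Pt) := by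
      simp only [sub_mul, mul_sub, smul_mul_assoc, mul_smul_comm]
    rw [← hth, e7, e1, hde, e2, hab, e3, e4]
    have e5 : th * Z * (Z * Pt) = ga * (Z * Pt) := by rw [hga]
    simp only [sub_mul, smul_mul_assoc, smul_sub, e5]
    rw [mul_assoc ga Z]
    have e6 : -(E * (P1 * Z^2)) * P1 * Z * (Z * Pt) = -(E * (P1 * Z^2 * P1 * Z^2 * Pt)) := by
      noncomm_ring
    rw [e6]
    module

end alg
end TE
namespace TE
attribute [local instance] Matrix.linftyOpNormedRing Matrix.linftyOpNormedAlgebra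

variable {S : Type*} [Fintype S] [DecidableEq S]

theorem norm_le_of_rows {A : Matrix S S ℝ} {c : ℝ} (hc : 0 ≤ c)
    (h : ∀ x, ∑ y, |A x y| ≤ c) : ‖A‖ ≤ c := by
  lift c to NNReal using hc
  rw [Matrix.linfty_opNorm_def]
  norm_cast
  refine Finset.sup_le fun x _ => ?_
  have := h x
  rw [← NNReal.coe_le_coe]
  push_cast
  simpa using this

theorem row_le_norm (A : Matrix S S ℝ) (x : S) : ∑ y, |A x y| ≤ ‖A‖ := by
  rw [Matrix.linfty_opNorm_def]
  have : (∑ y, ‖A x y‖₊) ≤ Finset.univ.sup fun i => ∑ j, ‖A i j‖₊ :=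
    Finset.le_sup (f := fun i => ∑ j, ‖A i j‖₊) (Finset.mem_univ x)
  rw [← NNReal.coe_le_coe] at this
  push_cast at this
  simpa using this

theorem row_le_matNorm (A : Matrix S S ℝ) (x : S) : ∑ y, |A x y| ≤ matNorm A :=
  le_ciSup (f := fun x => ∑ y, |A x y|) (Set.finite_range _).bddAbove x

theorem norm_le_matNorm [Nonempty S] (A : Matrix S S ℝ) : ‖A‖ ≤ matNorm A :=
  norm_le_of_rows ((Finset.sum_nonneg fun _ _ => abs_nonneg _).trans
    (row_le_matNorm A (Classical.arbitrary S))) (row_le_matNorm A)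

theorem entry_le_norm (A : Matrix S S ℝ) (x y : S) : |A x y| ≤ ‖A‖ :=
  (Finset.single_le_sum (f := fun y => |A x y|) (fun _ _ => abs_nonneg _)
    (Finset.mem_univ y)).trans (row_le_norm A x)

theorem stoch_norm {A : Matrix S S ℝ} (h : IsStochastic A) : ‖A‖ ≤ 1 :=
  norm_le_of_rows zero_le_one fun x => by
    rw [← h.2 x]; exact Finset.sum_le_sum fun y _ => (abs_of_nonneg (h.1 x y)).le

theorem stoch_one : IsStochastic (1 : Matrix S S ℝ) := by
  refine ⟨fun x y => ?_, fun x => ?_⟩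
  · rw [Matrix.one_apply]; split_ifs <;> norm_num
  · simp [Matrix.one_apply]

theorem stoch_mul {A B : Matrix S S ℝ} (hA : IsStochastic A) (hB : IsStochastic B) :
    IsStochastic (A * B) := by
  refine ⟨fun x y => ?_, fun x => ?_⟩
  · rw [Matrix.mul_apply]; exact Finset.sum_nonneg fun z _ => mul_nonneg (hA.1 _ _) (hB.1 _ _)
  · simp only [Matrix.mul_apply]
    rw [Finset.sum_comm]
    simp only [← Finset.mul_sum, hB.2, mul_one, hA.2]

theorem stoch_pow {A : Matrix S S ℝ} (hA : IsStochastic A) (k : ℕ) : IsStochastic (A ^ k) := by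
  induction k with
  | zero => simpa using stoch_one
  | succ k ih => rw [pow_succ]; exact stoch_mul ih hA

/-- oscillation of a column vector is at most D -/
def Osc (f : S → ℝ) (D : ℝ) : Prop := ∀ x y, f x - f y ≤ D

theorem osc_contract [Nonempty S] {Q : Matrix S S ℝ} (hQ : IsStochastic Q) {d : ℝ} (hd : 0 ≤ d)
    (hQd : ∀ x y, d ≤ Q x y) {f : S → ℝ} {D : ℝ} (hf : Osc f D) :
    Osc (Q *ᵥ f) ((1 - d) * D) := by
  intro x y
  obtain ⟨zm, hzm⟩ := Finite.exists_min f
  obtain ⟨zM, hzM⟩ := Finite.exists_max f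
  have hd1 : d ≤ 1 := by
    rw [← hQ.2 x]
    exact (hQd x x).trans (Finset.single_le_sum (f := fun y => Q x y) (fun _ _ => hQ.1 _ _)
      (Finset.mem_univ x))
  have h1 : (Q *ᵥ f) x ≤ f zM - d * (f zM - f zm) := by
    have e : f zM - (Q *ᵥ f) x = ∑ z, Q x z * (f zM - f z) := by
      simp only [mul_sub, Finset.sum_sub_distrib, ← Finset.sum_mul, hQ.2]
      simp [Matrix.mulVec, dotProduct]
    have : Q x zm * (f zM - f zm) ≤ ∑ z, Q x z * (f zM - f z) :=
      Finset.single_le_sum (f := fun z => Q x z * (f zM - f z))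
        (fun z _ => mul_nonneg (hQ.1 _ _) (sub_nonneg.2 (hzM z))) (Finset.mem_univ zm)
    have h2 : d * (f zM - f zm) ≤ Q x zm * (f zM - f zm) :=
      mul_le_mul_of_nonneg_right (hQd _ _) (sub_nonneg.2 (hzM _))
    linarith
  have h2 : f zm ≤ (Q *ᵥ f) y := by
    have e : (Q *ᵥ f) y - f zm = ∑ z, Q y z * (f z - f zm) := by
      simp only [mul_sub, Finset.sum_sub_distrib, ← Finset.sum_mul, hQ.2]
      simp [Matrix.mulVec, dotProduct]
    have : 0 ≤ ∑ z, Q y z * (f z - f zm) :=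
      Finset.sum_nonneg (fun z _ => mul_nonneg (hQ.1 _ _) (sub_nonneg.2 (hzm z)))
    linarith
  have h3 := mul_le_mul_of_nonneg_left (hf zM zm) (sub_nonneg.2 hd1)
  linarith

theorem osc_stoch [Nonempty S] {Q : Matrix S S ℝ} (hQ : IsStochastic Q)
    {f : S → ℝ} {D : ℝ} (hf : Osc f D) : Osc (Q *ᵥ f) D := by
  simpa using osc_contract hQ le_rfl hQ.1 hf

/-- partial backward product  Q_{k+j-1} ⋯ Q_k -/
noncomputable def bprod (Q : ℕ → Matrix S S ℝ) (k : ℕ) : ℕ → Matrix S S ℝ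
  | 0 => 1
  | j+1 => Q (k + j) * bprod Q k j

theorem bprod_add (Q : ℕ → Matrix S S ℝ) (k j : ℕ) :
    bprod Q 0 (k + j) = bprod Q k j * bprod Q 0 k := by
  induction j with
  | zero => simp [bprod]
  | succ j ih =>
    rw [← add_assoc, bprod, bprod, ih, mul_assoc]; simp

theorem bprod_stoch {Q : ℕ → Matrix S S ℝ} {k j : ℕ}
    (h : ∀ i, k ≤ i → i < k + j → IsStochastic (Q i)) : IsStochastic (bprod Q k j) := by
  induction j with
  | zero => exact stoch_one
  | succ j ih =>
    exact stoch_mul (h _ (by omega) (by omega)) (ih fun i h1 h2 => h i h1 (by omega))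

theorem bprod_close {Q : ℕ → Matrix S S ℝ} {Pt : Matrix S S ℝ} (hPt : IsStochastic Pt)
    {η : ℝ} {k j : ℕ}
    (h : ∀ i, k ≤ i → i < k + j → IsStochastic (Q i))
    (hη : ∀ i, k ≤ i → i < k + j → ‖Q i - Pt‖ ≤ η) : ‖bprod Q k j - Pt ^ j‖ ≤ j * η := by
  induction j with
  | zero => simp [bprod]
  | succ j ih =>
    have ih := ih (fun i h1 h2 => h i h1 (by omega)) (fun i h1 h2 => hη i h1 (by omega))
    have e : bprod Q k (j+1) - Pt ^ (j+1)
        = (Q (k+j) - Pt) * bprod Q k j + Pt * (bprod Q k j - Pt ^ j) := by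
      rw [bprod, pow_succ']; noncomm_ring
    have hb : ‖bprod Q k j‖ ≤ 1 := stoch_norm (bprod_stoch fun i h1 h2 => h i h1 (by omega))
    have hq := hη (k+j) (by omega) (by omega)
    rw [e]
    calc _ ≤ ‖Q (k+j) - Pt‖ * ‖bprod Q k j‖ + ‖Pt‖ * ‖bprod Q k j - Pt ^ j‖ :=
          (norm_add_le _ _).trans (add_le_add (norm_mul_le _ _) (norm_mul_le _ _))
      _ ≤ η * 1 + 1 * (j * η) := by
          have h0 : 0 ≤ η := (norm_nonneg _).trans hq
          have := stoch_norm hPt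
          gcongr
      _ = _ := by push_cast; ring

theorem bprod_osc [Nonempty S] {Q : ℕ → Matrix S S ℝ} {Pt : Matrix S S ℝ} (hPt : IsStochastic Pt)
    {N : ℕ} {d η : ℝ} (hd : 0 ≤ d) (hN : ∀ x y, 2 * d ≤ (Pt ^ N) x y) (hη : N * η ≤ d) {M : ℕ}
    (h : ∀ i, i < M → IsStochastic (Q i))
    (hQ : ∀ i, i < M → ‖Q i - Pt‖ ≤ η) {r : S → ℝ} {D : ℝ} (hr : Osc r D) :
    Osc (bprod Q 0 M *ᵥ r) ((1 - d) ^ (M / N) * D) := by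
  have main : ∀ i, i * N ≤ M → Osc (bprod Q 0 (i * N) *ᵥ r) ((1 - d) ^ i * D) := by
    intro i
    induction i with
    | zero => intro _; simpa [bprod] using hr
    | succ i ih =>
      intro hi
      have hi' : i * N + N ≤ M := by rw [Nat.succ_mul] at hi; exact hi
      have ih := ih (by omega)
      rw [Nat.succ_mul, bprod_add, ← Matrix.mulVec_mulVec, pow_succ', mul_assoc]
      have hs : IsStochastic (bprod Q (i * N) N) := bprod_stoch fun j _ h2 => h j (by omega)
      refine osc_contract hs hd (fun x y => ?_) ih
      have hc := bprod_close hPt (k := i * N) (j := N) (fun j _ h2 => h j (by omega))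
        (fun j _ h2 => hQ j (by omega))
      have h3 := (entry_le_norm _ x y).trans (hc.trans hη)
      rw [Matrix.sub_apply] at h3
      have := (abs_le.1 h3).1
      linarith [hN x y]
  have hM : M = M / N * N + M % N := (Nat.div_add_mod' M N).symm
  have h1 := main (M / N) (Nat.div_mul_le_self M N)
  have h2 : bprod Q 0 M = bprod Q (M / N * N) (M % N) * bprod Q 0 (M / N * N) := by
    rw [← bprod_add, ← hM]
  rw [h2, ← Matrix.mulVec_mulVec]
  exact osc_stoch (bprod_stoch fun j _ h2 => h j (by omega)) h1

theorem prodP_split (P : ℕ → Matrix S S ℝ) (n j : ℕ) (hj : j ≤ n) :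
    prodP P n = prodP P (n - j) * bprod (fun k => P (n - k)) 0 j := by
  induction j with
  | zero => simp [bprod]
  | succ j ih =>
    rw [ih (by omega)]
    have : n - j = (n - (j+1)) + 1 := by omega
    rw [bprod, ← mul_assoc]
    congr 1
    rw [this]
    simp only [prodP, List.range_succ, List.map_append, List.prod_append]
    simp [this]

theorem prodP_stoch {P : ℕ → Matrix S S ℝ} {n : ℕ}
    (h : ∀ k, 1 ≤ k → k ≤ n → IsStochastic (P k)) : IsStochastic (prodP P n) := by
  induction n with
  | zero => simpa [prodP] using stoch_one
  | succ n ih =>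
    have e : prodP P (n+1) = prodP P n * P (n+1) := by simp [prodP, List.range_succ]
    rw [e]
    exact stoch_mul (ih fun k h1 h2 => h k h1 (by omega)) (h _ (by omega) le_rfl)

/-- telescoping -/
theorem telescope {Q Φ : ℕ → Matrix S S ℝ} {M : ℕ} {e : ℝ}
    (h : ∀ i, i < M → IsStochastic (Q i))
    (hΦ : ∀ i, i < M → ‖Φ (i+1) * Q i - Φ i‖ ≤ e) :
    ‖Φ M * bprod Q 0 M - Φ 0‖ ≤ M * e := by
  induction M with
  | zero => simp [bprod]
  | succ M ih =>
    have ih := ih (fun i hi => h i (by omega)) (fun i hi => hΦ i (by omega))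
    have hb : ‖bprod Q 0 M‖ ≤ 1 := stoch_norm (bprod_stoch fun i h1 h2 => h i (by omega))
    have hq := hΦ M (by omega)
    have e1 : Φ (M+1) * bprod Q 0 (M+1) - Φ 0
        = (Φ (M+1) * Q M - Φ M) * bprod Q 0 M + (Φ M * bprod Q 0 M - Φ 0) := by
      rw [bprod, zero_add]; noncomm_ring
    rw [e1]
    calc _ ≤ ‖Φ (M+1) * Q M - Φ M‖ * ‖bprod Q 0 M‖ + ‖Φ M * bprod Q 0 M - Φ 0‖ :=
          (norm_add_le _ _).trans (add_le_add (norm_mul_le _ _) le_rfl)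
      _ ≤ e * 1 + M * e := by
          have h0 : 0 ≤ e := (norm_nonneg _).trans hq
          gcongr
      _ = _ := by push_cast; ring

theorem mulVec_abs_le (A : Matrix S S ℝ) (r : S → ℝ) {b : ℝ} (hr : ∀ x, |r x| ≤ b) (x : S) :
    |(A *ᵥ r) x| ≤ ‖A‖ * b := by
  have hb : 0 ≤ b := (abs_nonneg _).trans (hr x)
  calc |(A *ᵥ r) x| ≤ ∑ y, |A x y * r y| := Finset.abs_sum_le_sum_abs _ _
    _ ≤ ∑ y, |A x y| * b := Finset.sum_le_sum fun y _ => by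
        rw [abs_mul]; exact mul_le_mul_of_nonneg_left (hr y) (abs_nonneg _)
    _ = (∑ y, |A x y|) * b := by rw [Finset.sum_mul]
    _ ≤ _ := mul_le_mul_of_nonneg_right (row_le_norm A x) hb

/-- final comparison -/
theorem compare {Φ : Matrix S S ℝ} (hΦ : ∀ x, ∑ y, Φ x y = 1) {ν g : S → ℝ}
    (hν0 : ∀ x, 0 ≤ ν x) (hν1 : ∑ x, ν x = 1) {D : ℝ} (hg : Osc g D) (x : S) :
    |ν ⬝ᵥ g - (Φ *ᵥ g) x| ≤ (1 + ‖Φ‖) * D := by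
  have hgD : ∀ y, |g y - g x| ≤ D := fun y => abs_le.2 ⟨by linarith [hg x y], hg y x⟩
  have e : ν ⬝ᵥ g - (Φ *ᵥ g) x
      = ∑ y, ν y * (g y - g x) - (Φ *ᵥ (fun y => g y - g x)) x := by
    simp only [Matrix.mulVec, dotProduct, mul_sub, Finset.sum_sub_distrib, ← Finset.sum_mul, hΦ, hν1]
    ring
  rw [e]
  have h1 := mulVec_abs_le Φ (fun y => g y - g x) hgD x
  have h2 : |∑ y, ν y * (g y - g x)| ≤ D := by
    calc _ ≤ ∑ y, |ν y * (g y - g x)| := Finset.abs_sum_le_sum_abs _ _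
      _ ≤ ∑ y, ν y * D := Finset.sum_le_sum fun y _ => by
        rw [abs_mul, abs_of_nonneg (hν0 y)]; exact mul_le_mul_of_nonneg_left (hgD y) (hν0 y)
      _ = D := by rw [← Finset.sum_mul, hν1, one_mul]
  calc _ ≤ _ := abs_sub _ _
    _ ≤ D + ‖Φ‖ * D := add_le_add h2 h1
    _ = _ := by ring

end TE
namespace TE
attribute [local instance] Matrix.linftyOpNormedRing Matrix.linftyOpNormedAlgebra

variable {S : Type*} [Fintype S] [DecidableEq S]

theorem mul_E_eq_zero {A : Matrix S S ℝ} {π : S → ℝ} (h : ∀ x, ∑ y, A x y = 0) :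
    A * (Matrix.of fun _ y => π y) = 0 := by
  ext x y
  simp [Matrix.mul_apply, ← Finset.sum_mul, h]

theorem row_sum_of_mul_E {A : Matrix S S ℝ} {π : S → ℝ} (hπ1 : ∑ x, π x = 1)
    (h : A * (Matrix.of fun _ y => π y) = 0) (x : S) : ∑ y, A x y = 0 := by
  have h1 : ∀ y, (∑ z, A x z) * π y = 0 := fun y => by
    have := congrFun (congrFun h x) y
    simpa [Matrix.mul_apply, ← Finset.sum_mul] using this
  have h2 : ∑ y, (∑ z, A x z) * π y = 0 := Finset.sum_eq_zero fun y _ => h1 y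
  rwa [← Finset.mul_sum, hπ1, mul_one] at h2

theorem pos_power [Nonempty S] {Pt : Matrix S S ℝ} (hPt : IsStochastic Pt)
    (hirr : ∃ N : ℕ, ∀ x y, 0 < (Pt ^ N) x y) :
    ∃ N : ℕ, 0 < N ∧ ∃ d : ℝ, 0 < d ∧ d ≤ 1/2 ∧ ∀ x y, 2 * d ≤ (Pt ^ N) x y := by
  obtain ⟨N, hN⟩ := hirr
  obtain ⟨p, hp⟩ := Finite.exists_min (fun p : S × S => (Pt ^ N) p.1 p.2)
  have hle : ∀ x y, (Pt ^ N) x y ≤ 1 := fun x y => by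
    rw [← (stoch_pow hPt N).2 x]
    exact Finset.single_le_sum (f := fun y => (Pt ^ N) x y) (fun _ _ => (hN _ _).le)
      (Finset.mem_univ y)
  refine ⟨N + 1, Nat.succ_pos _, (Pt ^ N) p.1 p.2 / 2, half_pos (hN _ _), ?_, fun x y => ?_⟩
  · linarith [hle p.1 p.2]
  · rw [pow_succ', Matrix.mul_apply]
    calc 2 * ((Pt ^ N) p.1 p.2 / 2) = ∑ z, Pt x z * (Pt ^ N) p.1 p.2 := by
          rw [← Finset.sum_mul, hPt.2]; ring
      _ ≤ _ := Finset.sum_le_sum fun z _ => mul_le_mul_of_nonneg_left (hp (z, y)) (hPt.1 _ _)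

theorem fundamental [Nonempty S] {Pt : Matrix S S ℝ} (hPt : IsStochastic Pt)
    {N : ℕ} {d : ℝ} (hd : 0 < d) (hN : ∀ x y, 2 * d ≤ (Pt ^ N) x y)
    {π : S → ℝ} (hπ1 : ∑ x, π x = 1) (hπP : π ᵥ* Pt = π) {E Z : Matrix S S ℝ}
    (hE : E = Matrix.of fun _ y => π y) (hZ : Z = (1 - Pt + E)⁻¹) :
    E * Pt = E ∧ Pt * E = E ∧ Z * E = E ∧ Z * Pt = Z + E - 1 ∧ Pt * Z = Z + E - 1 := by
  have hEP : E * Pt = E := by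
    ext x y
    have := congrFun hπP y
    rw [hE]
    simpa [Matrix.mul_apply, Matrix.vecMul, dotProduct] using this
  have hPE : Pt * E = E := by
    ext x y
    rw [hE]
    simp [Matrix.mul_apply, ← Finset.sum_mul, hPt.2]
  have hEE : E * E = E := by
    ext x y
    rw [hE]
    simp [Matrix.mul_apply, ← Finset.sum_mul, hπ1]
  have hinj : Function.Injective (1 - Pt + E).mulVec := by
    intro u w huw
    have h0 : (1 - Pt + E) *ᵥ (u - w) = 0 := by
      rw [Matrix.mulVec_sub]; exact sub_eq_zero.2 huw
    obtain ⟨f, hf⟩ : ∃ f, f = u - w := ⟨_, rfl⟩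
    rw [← hf] at h0
    have h1 : E *ᵥ f = 0 := by
      have : E *ᵥ ((1 - Pt + E) *ᵥ f) = E *ᵥ f := by
        rw [Matrix.mulVec_mulVec, mul_add, mul_sub, hEP, hEE]; simp
      rw [← this, h0, Matrix.mulVec_zero]
    have h2 : Pt *ᵥ f = f := by
      rw [Matrix.add_mulVec, Matrix.sub_mulVec, h1, add_zero, Matrix.one_mulVec] at h0
      exact (sub_eq_zero.1 h0).symm
    have h3 : ∀ k : ℕ, (Pt ^ k) *ᵥ f = f := by
      intro k
      induction k with
      | zero => simp
      | succ k ih => rw [pow_succ, ← Matrix.mulVec_mulVec, h2, ih]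
    obtain ⟨zm, hzm⟩ := Finite.exists_min f
    obtain ⟨zM, hzM⟩ := Finite.exists_max f
    have h4 : Osc f (f zM - f zm) := fun x y => by linarith [hzm y, hzM x]
    have h5 := osc_contract (stoch_pow hPt N) (d := d) hd.le
      (fun x y => by linarith [hN x y]) h4
    rw [h3] at h5
    have h6 := h5 zM zm
    have h7 : f zM - f zm ≤ 0 := by nlinarith [hzm zM]
    have h8 : ∀ x, f x = f zm := fun x => by linarith [hzm x, hzM x]
    have h9 : f zm = 0 := by
      have := congrFun h1 zm
      rw [hE] at this
      simpa [Matrix.mulVec, dotProduct, h8, ← Finset.sum_mul, hπ1] using this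
    have : f = 0 := by ext x; rw [h8, h9]; rfl
    rw [hf] at this
    exact sub_eq_zero.1 this
  have hu : IsUnit (1 - Pt + E) := Matrix.mulVec_injective_iff_isUnit.1 hinj
  have hdet := (Matrix.isUnit_iff_isUnit_det _).1 hu
  have hZl : Z * (1 - Pt + E) = 1 := hZ ▸ Matrix.nonsing_inv_mul _ hdet
  have hZr : (1 - Pt + E) * Z = 1 := hZ ▸ Matrix.mul_nonsing_inv _ hdet
  have hZE : Z * E = E := by
    have : (1 - Pt + E) * E = E := by rw [add_mul, sub_mul, hPE, hEE]; simp
    calc Z * E = Z * ((1 - Pt + E) * E) := by rw [this]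
      _ = E := by rw [← mul_assoc, hZl, one_mul]
  have hEZ : E * Z = E := by
    have : E * (1 - Pt + E) = E := by rw [mul_add, mul_sub, hEP, hEE]; simp
    calc E * Z = (E * (1 - Pt + E)) * Z := by rw [this]
      _ = E := by rw [mul_assoc, hZr, mul_one]
  refine ⟨hEP, hPE, hZE, ?_, ?_⟩
  · rw [mul_add, mul_sub, hZE, mul_one] at hZl
    rw [← hZl]; abel
  · rw [add_mul, sub_mul, hEZ, one_mul] at hZr
    rw [← hZr]; abel

section bounds
variable {R : Type*} [NormedRing R] [NormedAlgebra ℝ R]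

theorem a_bound (al be : R) {k m : ℝ} (hk : 0 ≤ k) (hm : 1 ≤ m) (hkm : k ≤ 2 * m) :
    ‖k • al + be‖ ≤ m * (2 * ‖al‖ + ‖be‖) := by
  calc _ ≤ ‖k • al‖ + ‖be‖ := norm_add_le _ _
    _ = k * ‖al‖ + 1 * ‖be‖ := by rw [norm_smul, Real.norm_of_nonneg hk, one_mul]
    _ ≤ (2 * m) * ‖al‖ + m * ‖be‖ := by gcongr
    _ = _ := by ring

theorem b_bound (ga de ze : R) {k m : ℝ} (hk : 0 ≤ k) (hm : 1 ≤ m) (hkm : k ≤ 2 * m) :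
    ‖k^2 • ga + k • de + ze‖ ≤ m^2 * (4 * ‖ga‖ + 2 * ‖de‖ + ‖ze‖) := by
  have hm2 : m ≤ m^2 := by nlinarith
  calc _ ≤ ‖k^2 • ga‖ + ‖k • de‖ + ‖ze‖ := norm_add₃_le
    _ = k^2 * ‖ga‖ + k * ‖de‖ + 1 * ‖ze‖ := by
        rw [norm_smul, norm_smul, Real.norm_of_nonneg hk, Real.norm_of_nonneg (sq_nonneg k), one_mul]
    _ ≤ (2 * m)^2 * ‖ga‖ + (2 * m^2) * ‖de‖ + m^2 * ‖ze‖ := by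
        gcongr
        · linarith
        · nlinarith
    _ = _ := by ring

theorem phi_bounds (E Pt P1 P2 al be ga de ze : R)
    (h0 : E * Pt = E)
    (h1 : al * Pt - E * P1 = al)
    (h2 : (al + be) * Pt = be)
    (h3 : ga * Pt - al * P1 + (1/2 : ℝ) • (E * P2) = ga)
    (h4 : (2:ℝ) • (ga * Pt) + de * Pt - (al + be) * P1 = de)
    (h5 : (ga + de + ze) * Pt = ze) (c : ℝ) (hc : 0 ≤ c) :
    ∃ C : ℝ, 0 ≤ C ∧ ∀ ε m k : ℝ, 0 < ε → 1 ≤ m → ε * m ≤ 1 → 0 ≤ k → k ≤ m →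
      ‖E + ε • ((k+1) • al + be) + ε^2 • ((k+1)^2 • ga + (k+1) • de + ze)‖ ≤ C ∧
      ∀ Q : R, ‖Q - (Pt - (ε * k) • P1 + (ε ^ 2 / 2 * k ^ 2) • P2)‖ ≤ c * ε^3 * m^3 →
        ‖(E + ε • ((k+1) • al + be) + ε^2 • ((k+1)^2 • ga + (k+1) • de + ze)) * Q
          - (E + ε • (k • al + be) + ε^2 • (k^2 • ga + k • de + ze))‖ ≤ C * (ε^3 * m^3) := by
  obtain ⟨A, hA⟩ : ∃ A, A = 2 * ‖al‖ + ‖be‖ := ⟨_, rfl⟩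
  obtain ⟨B, hB⟩ : ∃ B, B = 4 * ‖ga‖ + 2 * ‖de‖ + ‖ze‖ := ⟨_, rfl⟩
  have hA0 : 0 ≤ A := by rw [hA]; positivity
  have hB0 : 0 ≤ B := by rw [hB]; positivity
  obtain ⟨C1, hC1⟩ : ∃ C1, C1 = ‖E‖ + A + B := ⟨_, rfl⟩
  have hC10 : 0 ≤ C1 := by rw [hC1]; positivity
  refine ⟨C1 + (C1 * c + A * ‖P2‖ + B * ‖P1‖ + B * ‖P2‖), by positivity, ?_⟩
  intro ε m k hε hm hεm hk hkm
  have ha := a_bound al be (k := k + 1) (m := m) (by linarith) hm (by linarith)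
  have hb := b_bound ga de ze (k := k + 1) (m := m) (by linarith) hm (by linarith)
  have hstep := poly_step h0 h1 h2 h3 h4 h5 ε k
  rw [← hA] at ha
  rw [← hB] at hb
  obtain ⟨a, ha'⟩ : ∃ a, a = (k+1) • al + be := ⟨_, rfl⟩
  obtain ⟨b, hb'⟩ : ∃ b, b = (k+1)^2 • ga + (k+1) • de + ze := ⟨_, rfl⟩
  rw [← ha'] at ha
  rw [← hb'] at hb
  rw [← ha', ← hb'] at hstep ⊢
  have hm0 : 0 < m := by linarith
  have hΦ : ‖E + ε • a + ε^2 • b‖ ≤ C1 := by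
    calc _ ≤ ‖E‖ + ‖ε • a‖ + ‖ε^2 • b‖ := norm_add₃_le
      _ = ‖E‖ + ε * ‖a‖ + ε^2 * ‖b‖ := by
        rw [norm_smul, norm_smul, Real.norm_of_nonneg hε.le, Real.norm_of_nonneg (sq_nonneg ε)]
      _ ≤ ‖E‖ + ε * (m * A) + ε^2 * (m^2 * B) := by gcongr
      _ = ‖E‖ + (ε * m) * A + (ε * m)^2 * B := by ring
      _ ≤ ‖E‖ + 1 * A + 1 ^ 2 * B := by gcongr
      _ = C1 := by rw [hC1]; ring
  refine ⟨hΦ.trans (by have : 0 ≤ C1 * c + A * ‖P2‖ + B * ‖P1‖ + B * ‖P2‖ := by positivity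
                       linarith), fun Q hQ => ?_⟩
  have e : (E + ε • a + ε^2 • b) * Q - (E + ε • (k • al + be) + ε^2 • (k^2 • ga + k • de + ze))
      = (E + ε • a + ε^2 • b) * (Q - (Pt - (ε * k) • P1 + (ε ^ 2 / 2 * k ^ 2) • P2))
        + (ε^3 • ((k^2/2) • (a * P2) - k • (b * P1)) + (ε^4 * (k^2/2)) • (b * P2)) := by
    rw [← hstep, mul_sub]; abel
  rw [e]
  have hk2 : k^2 / 2 ≤ m^2 := by nlinarith
  have n1 : ‖(k^2/2) • (a * P2)‖ ≤ m^2 * ((m * A) * ‖P2‖) := by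
    rw [norm_smul, Real.norm_of_nonneg (by positivity)]
    gcongr
    exact (norm_mul_le _ _).trans (by gcongr)
  have n2 : ‖k • (b * P1)‖ ≤ m * ((m^2 * B) * ‖P1‖) := by
    rw [norm_smul, Real.norm_of_nonneg (by positivity)]
    gcongr
    exact (norm_mul_le _ _).trans (by gcongr)
  have n3 : ‖(ε^4 * (k^2/2)) • (b * P2)‖ ≤ (ε^4 * m^2) * ((m^2 * B) * ‖P2‖) := by
    rw [norm_smul, Real.norm_of_nonneg (by positivity)]
    gcongr
    exact (norm_mul_le _ _).trans (by gcongr)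
  have n4 : ‖ε^3 • ((k^2/2) • (a * P2) - k • (b * P1))‖
      ≤ ε^3 * (m^2 * ((m * A) * ‖P2‖) + m * ((m^2 * B) * ‖P1‖)) := by
    rw [norm_smul, Real.norm_of_nonneg (by positivity)]
    gcongr
    exact (norm_sub_le _ _).trans (add_le_add n1 n2)
  have n5 := (norm_mul_le (E + ε • a + ε^2 • b)
    (Q - (Pt - (ε * k) • P1 + (ε ^ 2 / 2 * k ^ 2) • P2))).trans
      (mul_le_mul hΦ hQ (norm_nonneg _) hC10)
  have n6 : (ε^4 * m^2) * ((m^2 * B) * ‖P2‖) ≤ (ε^3 * m^3) * (B * ‖P2‖) := by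
    have : (ε^4 * m^2) * ((m^2 * B) * ‖P2‖) = (ε * m) * ((ε^3 * m^3) * (B * ‖P2‖)) := by ring
    rw [this]
    exact mul_le_of_le_one_left (by positivity) hεm
  have n7 : 0 ≤ C1 * (ε^3 * m^3) := by positivity
  calc _ ≤ _ := (norm_add_le _ _).trans (add_le_add n5 ((norm_add_le _ _).trans (add_le_add n4 (n3.trans n6))))
    _ ≤ _ := by linarith
end bounds

theorem growth {n : ℝ → ℕ} {a : ℝ → ℝ}
    (hn : Tendsto (fun ε => (n ε : ℝ) / Real.log (1/ε)) (𝓝[>] (0:ℝ)) atTop)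
    (ha : Tendsto a (𝓝[>] (0:ℝ)) atTop) (K : ℝ) (hK : 0 ≤ K) :
    ∀ᶠ ε in 𝓝[>] (0:ℝ), 1 ≤ mcut n a ε ∧ K * Real.log (1/ε) ≤ mcut n a ε ∧
      mcut n a ε + 1 ≤ n ε := by
  have hlog : Tendsto (fun ε : ℝ => Real.log (1/ε)) (𝓝[>] (0:ℝ)) atTop := by
    simp only [one_div]
    exact Real.tendsto_log_atTop.comp tendsto_inv_nhdsGT_zero
  filter_upwards [hn.eventually_ge_atTop (2 * (K+1)), ha.eventually_ge_atTop (K+1),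
    hlog.eventually_ge_atTop 1] with ε h1 h2 h3
  have hL : 0 < Real.log (1/ε) := by linarith
  rw [le_div_iff₀ hL] at h1
  have h4 : (K+1) * Real.log (1/ε) ≤ min ((n ε : ℝ) / 2) (a ε * Real.log (1/ε)) :=
    le_min (by linarith) (mul_le_mul_of_nonneg_right h2 hL.le)
  have h5 : 1 ≤ mcut n a ε := by
    unfold mcut
    rw [Nat.one_le_floor_iff]
    nlinarith
  have h6 : (mcut n a ε : ℝ) ≤ (n ε : ℝ) / 2 :=
    (Nat.floor_le (by nlinarith)).trans (min_le_left _ _)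
  refine ⟨h5, ?_, ?_⟩
  · have := Nat.lt_floor_add_one (min ((n ε : ℝ) / 2) (a ε * Real.log (1/ε)))
    unfold mcut
    nlinarith
  · have : (2 * mcut n a ε : ℝ) ≤ n ε := by linarith
    have : 2 * mcut n a ε ≤ n ε := by exact_mod_cast this
    omega

theorem geom_small {d : ℝ} (hd : 0 < d) (hd2 : d ≤ 1/2) {N : ℕ} (hN : 0 < N) :
    ∃ K : ℝ, 0 ≤ K ∧ ∀ (ε : ℝ) (m : ℕ), 0 < ε → K * Real.log (1/ε) ≤ m →
      (1 - d) ^ ((m + 1) / N) ≤ 2 * ε ^ 3 := by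
  have hρ0 : 0 < 1 - d := by linarith
  have hl : Real.log (1 - d) < 0 := Real.log_neg hρ0 (by linarith)
  have hN' : (0:ℝ) < N := by exact_mod_cast hN
  refine ⟨3 * N / (- Real.log (1 - d)), div_nonneg (by positivity) (by linarith), ?_⟩
  intro ε m hε hm
  have h1 : (1 - d) ^ ((m + 1) / N + 1) ≤ ε ^ 3 := by
    rw [← Real.log_le_log_iff (by positivity) (by positivity), Real.log_pow, Real.log_pow]
    rw [one_div, Real.log_inv] at hm
    have h2 : (m:ℝ) ≤ N * (((m+1)/N + 1 : ℕ) : ℝ) := by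
      have := Nat.lt_mul_div_succ (m+1) hN
      have : m ≤ N * ((m+1)/N + 1) := by omega
      exact_mod_cast this
    have h3 := hm.trans h2
    rw [div_mul_eq_mul_div, div_le_iff₀ (by linarith)] at h3
    push_cast at h3 ⊢
    have h4 : (N:ℝ) * (3 * -Real.log ε) ≤ N * ((((m+1)/N : ℕ) + 1 : ℝ) * -Real.log (1-d)) := by
      linarith
    have := le_of_mul_le_mul_left h4 hN'
    linarith
  rw [pow_succ] at h1
  have : 0 ≤ (1 - d) ^ ((m + 1) / N) := by positivity
  nlinarith

end TE
namespace TE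
attribute [local instance] Matrix.linftyOpNormedRing Matrix.linftyOpNormedAlgebra

variable {S : Type*} [Fintype S] [DecidableEq S]

theorem E_mulVec (π : S → ℝ) (M : Matrix S S ℝ) (r : S → ℝ) (x : S) :
    (((Matrix.of fun _ y => π y : Matrix S S ℝ) * M) *ᵥ r) x = π ⬝ᵥ (M *ᵥ r) := by
  rw [← Matrix.mulVec_mulVec]; rfl

theorem target_eq (π r : S → ℝ) (M1 M2 P2 M3 M4 : Matrix S S ℝ) (ε : ℝ) (x : S)
    {E : Matrix S S ℝ} (hE : E = Matrix.of fun _ y => π y) :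
    ((E + ε • (-(E * M1)) + ε^2 • (E * M2 + ((1/2 : ℝ) • (E * P2) + E * M3) * M4)) *ᵥ r) x
      = π ⬝ᵥ r - ε * (π ⬝ᵥ (M1 *ᵥ r)) + ε^2 * (π ⬝ᵥ (M2 *ᵥ r)) +
        ε^2 * (((1/2 : ℝ) • (π ᵥ* P2) + π ᵥ* M3) ⬝ᵥ (M4 *ᵥ r)) := by
  have h0 : (E *ᵥ r) x = π ⬝ᵥ r := by rw [hE]; rfl
  have h1 : ∀ M, ((E * M) *ᵥ r) x = π ⬝ᵥ (M *ᵥ r) := fun M => by rw [hE]; exact E_mulVec π M r x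
  have h2 : ((1/2 : ℝ) • (E * P2) + E * M3) * M4 = (1/2 : ℝ) • (E * (P2 * M4)) + E * (M3 * M4) := by
    simp only [add_mul, smul_mul_assoc, mul_assoc]
  rw [h2]
  simp only [Matrix.add_mulVec, Matrix.smul_mulVec, Matrix.neg_mulVec, Pi.add_apply, Pi.smul_apply,
    Pi.neg_apply, h0, h1, smul_eq_mul, add_dotProduct, smul_dotProduct]
  rw [← Matrix.mulVec_mulVec, ← Matrix.mulVec_mulVec, Matrix.dotProduct_mulVec π P2,
    Matrix.dotProduct_mulVec π M3]
  ring

theorem phi_rowsum {E al be ga de ze : Matrix S S ℝ} {π : S → ℝ} (hπ1 : ∑ x, π x = 1)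
    (hE : E = Matrix.of fun _ y => π y)
    (h1 : al * E = 0) (h2 : be * E = 0) (h3 : ga * E = 0) (h4 : de * E = 0) (h5 : ze * E = 0)
    (ε k : ℝ) (x : S) :
    ∑ y, (E + ε • (k • al + be) + ε^2 • (k^2 • ga + k • de + ze)) x y = 1 := by
  have hs : ∀ A : Matrix S S ℝ, A * E = 0 → ∑ y, A x y = 0 := fun A hA =>
    row_sum_of_mul_E hπ1 (by rw [← hE]; exact hA) x
  have hB : (ε • (k • al + be) + ε^2 • (k^2 • ga + k • de + ze)) * E = 0 := by
    simp only [add_mul, smul_mul_assoc, h1, h2, h3, h4, h5]; simp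
  have := hs _ hB
  rw [add_assoc]
  simp only [Matrix.add_apply E, Finset.sum_add_distrib]
  rw [this, hE]; simpa using hπ1

theorem dot_stoch_abs {ν r : S → ℝ} (hν0 : ∀ x, 0 ≤ ν x) (hν1 : ∑ x, ν x = 1) {b : ℝ}
    (hr : ∀ x, |r x| ≤ b) : |ν ⬝ᵥ r| ≤ b := by
  calc _ ≤ ∑ y, |ν y * r y| := Finset.abs_sum_le_sum_abs _ _
    _ ≤ ∑ y, ν y * b := Finset.sum_le_sum fun y _ => by
      rw [abs_mul, abs_of_nonneg (hν0 y)]; exact mul_le_mul_of_nonneg_left (hr y) (hν0 y)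
    _ = b := by rw [← Finset.sum_mul, hν1, one_mul]

theorem vecMul_prob {ν : S → ℝ} (hν0 : ∀ x, 0 ≤ ν x) (hν1 : ∑ x, ν x = 1) {A : Matrix S S ℝ}
    (hA : IsStochastic A) : (∀ x, 0 ≤ (ν ᵥ* A) x) ∧ ∑ x, (ν ᵥ* A) x = 1 := by
  refine ⟨fun x => Finset.sum_nonneg fun y _ => mul_nonneg (hν0 y) (hA.1 _ _), ?_⟩
  simp only [Matrix.vecMul, dotProduct]
  rw [Finset.sum_comm]
  simp only [← Finset.mul_sum, hA.2, mul_one, hν1]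

/-- either the row sums of P1, P2 vanish, or ε m is bounded below -/
theorem rowsum_alternative [Nonempty S] {Pt P1 P2 : Matrix S S ℝ} (hPt : IsStochastic Pt)
    {c : ℝ} (hc : 0 < c) (h : ¬ ∀ x, ∑ y, P1 x y = 0 ∧ ∑ y, P2 x y = 0) :
    ∃ δ : ℝ, 0 < δ ∧ ∀ (ε m : ℝ) (Q : Matrix S S ℝ), 0 < ε → 1 ≤ m → IsStochastic Q →
      ‖Q - (Pt - (ε * m) • P1 + (ε ^ 2 / 2 * m ^ 2) • P2)‖ ≤ c * ε^3 * m^3 → δ ≤ ε * m := by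
  push Not at h
  obtain ⟨x, hx⟩ := h
  obtain ⟨p1, hp1⟩ : ∃ p, p = ∑ y, P1 x y := ⟨_, rfl⟩
  obtain ⟨p2, hp2⟩ : ∃ p, p = ∑ y, P2 x y := ⟨_, rfl⟩
  rw [← hp1, ← hp2] at hx
  have key : ∀ (ε m : ℝ) (Q : Matrix S S ℝ), 0 < ε → 1 ≤ m → IsStochastic Q →
      ‖Q - (Pt - (ε * m) • P1 + (ε ^ 2 / 2 * m ^ 2) • P2)‖ ≤ c * ε^3 * m^3 →
      |p1 - (ε * m) / 2 * p2| ≤ c * (ε * m)^2 := by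
    intro ε m Q hε hm hQ hn
    have ht : 0 < ε * m := by positivity
    have h1 := (Finset.abs_sum_le_sum_abs (fun y =>
      (Q - (Pt - (ε * m) • P1 + (ε ^ 2 / 2 * m ^ 2) • P2)) x y) Finset.univ).trans
      ((row_le_norm _ x).trans hn)
    have e : ∑ y, (Q - (Pt - (ε * m) • P1 + (ε ^ 2 / 2 * m ^ 2) • P2)) x y
        = (ε * m) * (p1 - (ε * m) / 2 * p2) := by
      simp only [Matrix.sub_apply, Matrix.add_apply, Matrix.smul_apply, smul_eq_mul,
        Finset.sum_sub_distrib, Finset.sum_add_distrib, ← Finset.mul_sum, hQ.2, hPt.2, ← hp1, ← hp2]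
      ring
    rw [e, abs_mul, abs_of_pos ht] at h1
    have h2 : c * ε^3 * m^3 = (ε * m) * (c * (ε * m)^2) := by ring
    rw [h2] at h1
    exact le_of_mul_le_mul_left h1 ht
  by_cases h10 : p1 = 0
  · have h20 := abs_pos.2 (hx h10)
    refine ⟨|p2| / (2 * c), by positivity, fun ε m Q hε hm hQ hn => ?_⟩
    have := key ε m Q hε hm hQ hn
    have ht : 0 < ε * m := by positivity
    rw [h10, zero_sub, abs_neg, abs_mul, abs_of_pos (by positivity : 0 < ε * m / 2)] at this
    have h3 : (ε * m) * (|p2| / 2) ≤ (ε * m) * (c * (ε * m)) := by linarith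
    have := le_of_mul_le_mul_left h3 ht
    rw [div_le_iff₀ (by positivity)]
    linarith
  · have h10' := abs_pos.2 h10
    refine ⟨min 1 (|p1| / (|p2| / 2 + c)), by positivity, fun ε m Q hε hm hQ hn => ?_⟩
    have := key ε m Q hε hm hQ hn
    have ht : 0 < ε * m := by positivity
    by_contra! hlt
    obtain ⟨ht1, ht2⟩ := lt_min_iff.1 hlt
    rw [lt_div_iff₀ (by positivity)] at ht2
    have h4 : |p1| ≤ |p1 - ε * m / 2 * p2| + |ε * m / 2 * p2| := by
      have := abs_add_le (p1 - ε * m / 2 * p2) (ε * m / 2 * p2)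
      simpa using this
    rw [abs_mul (ε * m / 2), abs_of_pos (by positivity : 0 < ε * m / 2)] at h4
    have h5 : c * (ε * m)^2 ≤ c * (ε * m) := by
      have : (ε * m)^2 ≤ ε * m := by nlinarith
      gcongr
    linarith

theorem trivial_case {μ r : S → ℝ} (hμ0 : ∀ x, 0 ≤ μ x) (hμ1 : ∑ x, μ x = 1)
    (A0 A1 A2 A3 δ : ℝ) (hδ : 0 < δ) : ∃ C : ℝ, 0 < C ∧ ∀ (ε m : ℝ) (Q : Matrix S S ℝ),
      0 < ε → ε ≤ 1 → 1 ≤ m → IsStochastic Q → δ ≤ ε * m →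
      |μ ⬝ᵥ (Q *ᵥ r) - (A0 - ε * A1 + ε^2 * A2 + ε^2 * A3)| ≤ C * ε^3 * m^4 := by
  obtain ⟨b, hb⟩ : ∃ b : ℝ, b = ∑ x, |r x| := ⟨_, rfl⟩
  have hr : ∀ x, |r x| ≤ b := fun x => by
    rw [hb]
    exact Finset.single_le_sum (f := fun x => |r x|) (fun _ _ => abs_nonneg _) (Finset.mem_univ x)
  have hb0 : 0 ≤ b := by rw [hb]; exact Finset.sum_nonneg fun _ _ => abs_nonneg _
  obtain ⟨K, hK⟩ : ∃ K, K = b + |A0| + |A1| + |A2| + |A3| + 1 := ⟨_, rfl⟩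
  have hK0 : 0 < K := by rw [hK]; positivity
  refine ⟨K / δ^3, by positivity, fun ε m Q hε hε1 hm hQ hδm => ?_⟩
  have h1 : |μ ⬝ᵥ (Q *ᵥ r)| ≤ b := dot_stoch_abs hμ0 hμ1 fun x =>
    (mulVec_abs_le Q r hr x).trans (mul_le_of_le_one_left hb0 (stoch_norm hQ))
  have h2 : |ε * A1| ≤ |A1| := by
    rw [abs_mul, abs_of_pos hε]; exact mul_le_of_le_one_left (abs_nonneg _) hε1
  have hε2 : ε^2 ≤ 1 := pow_le_one₀ hε.le hε1
  have h3 : ∀ A : ℝ, |ε^2 * A| ≤ |A| := fun A => by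
    rw [abs_mul, abs_of_nonneg (sq_nonneg ε)]; exact mul_le_of_le_one_left (abs_nonneg _) hε2
  have h4 : |μ ⬝ᵥ (Q *ᵥ r) - (A0 - ε * A1 + ε^2 * A2 + ε^2 * A3)| ≤ K := by
    have := h3 A2
    have := h3 A3
    rw [abs_le] at *
    have := neg_abs_le A0
    have := le_abs_self A0
    constructor <;> linarith [h1.1, h1.2, h2.1, h2.2]
  refine h4.trans ?_
  have h5 : δ^3 ≤ (ε * m)^3 := by gcongr
  have h6 : (ε * m)^3 ≤ (ε * m)^3 * m := le_mul_of_one_le_right (by positivity) hm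
  calc K = K / δ^3 * δ^3 := by field_simp
    _ ≤ K / δ^3 * ((ε * m)^3 * m) := by gcongr; exact h5.trans h6
    _ = _ := by ring

theorem close_bound {Pt P1 P2 : Matrix S S ℝ} {c : ℝ} (hc : 0 < c) {ε m k : ℝ} {Q : Matrix S S ℝ}
    (hε : 0 < ε) (hm : 1 ≤ m) (hεm : ε * m ≤ 1) (hk : 0 ≤ k) (hkm : k ≤ m)
    (hQ : ‖Q - (Pt - (ε * k) • P1 + (ε ^ 2 / 2 * k ^ 2) • P2)‖ ≤ c * ε^3 * m^3) :
    ‖Q - Pt‖ ≤ (ε * m) * (c + ‖P1‖ + ‖P2‖) := by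
  have e : Q - Pt = (Q - (Pt - (ε * k) • P1 + (ε ^ 2 / 2 * k ^ 2) • P2))
      + (-((ε * k) • P1) + (ε ^ 2 / 2 * k ^ 2) • P2) := by abel
  have hm0 : 0 < m := by linarith
  have ht : 0 < ε * m := by positivity
  have ht2 : (ε * m)^2 ≤ ε * m := by nlinarith
  have ht3 : (ε * m)^3 ≤ ε * m := by nlinarith
  have n1 : ‖(ε * k) • P1‖ ≤ (ε * m) * ‖P1‖ := by
    rw [norm_smul, Real.norm_of_nonneg (by positivity)]; gcongr
  have n2 : ‖(ε ^ 2 / 2 * k ^ 2) • P2‖ ≤ (ε * m) * ‖P2‖ := by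
    rw [norm_smul, Real.norm_of_nonneg (by positivity)]
    have : ε^2 / 2 * k^2 ≤ ε * m := by
      calc ε^2 / 2 * k^2 ≤ ε^2 * m^2 := by gcongr; linarith [sq_nonneg ε]
        _ = (ε * m)^2 := by ring
        _ ≤ _ := ht2
    gcongr
  have n3 : c * ε^3 * m^3 ≤ (ε * m) * c := by
    calc c * ε^3 * m^3 = c * (ε * m)^3 := by ring
      _ ≤ c * (ε * m) := by gcongr
      _ = _ := by ring
  rw [e]
  refine (norm_add_le _ _).trans ?_
  have := norm_add_le (-((ε * k) • P1)) ((ε ^ 2 / 2 * k ^ 2) • P2)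
  rw [norm_neg] at this
  linarith

end TE
section
attribute [local instance] Matrix.linftyOpNormedRing Matrix.linftyOpNormedAlgebra

/-- Theorem 6: second-order approximation of μ P₁(ε)⋯P_{n(ε)}(ε) r for long horizons,
expanding around the final transition matrix P̃, with error O(ε³ m(ε)⁴) as ε ↓ 0,
where Z = (I − P̃ + Π̃)⁻¹. -/
theorem transient_expectation_terminal_expansion_second_order
    {S : Type*} [Fintype S] [Nonempty S] [DecidableEq S]
    (ε₀ : ℝ) (hε₀ : 0 < ε₀) (n : ℝ → ℕ) (a : ℝ → ℝ)
    (hn : Tendsto (fun ε => (n ε : ℝ) / Real.log (1/ε)) (𝓝[>] (0:ℝ)) atTop)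
    (ha0 : ∀ ε : ℝ, 0 < ε → ε < ε₀ → 0 < a ε)
    (ha : Tendsto a (𝓝[>] (0:ℝ)) atTop)
    (P : ℕ → ℝ → Matrix S S ℝ) (Pt Pt1 Pt2 : Matrix S S ℝ)
    (hstoch : ∀ ε : ℝ, 0 < ε → ε < ε₀ → ∀ k : ℕ, 1 ≤ k → k ≤ n ε → IsStochastic (P k ε))
    (hPt : IsStochastic Pt)
    (hirr : ∃ N : ℕ, ∀ x y, 0 < (Pt ^ N) x y)
    (π : S → ℝ) (hπ0 : ∀ x, 0 ≤ π x) (hπ1 : ∑ x, π x = 1) (hπP : π ᵥ* Pt = π)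
    (happrox : ∃ c > (0:ℝ), ∃ ε₁ > (0:ℝ), ∀ ε : ℝ, 0 < ε → ε < ε₁ →
      ∀ k : ℕ, k ≤ mcut n a ε →
        matNorm (P (n ε - k) ε - (Pt - (ε * k) • Pt1 + (ε ^ 2 / 2 * (k : ℝ) ^ 2) • Pt2))
          ≤ c * ε ^ 3 * (mcut n a ε : ℝ) ^ 3) :
    ∀ μ r : S → ℝ, (∀ x, 0 ≤ μ x) → (∑ x, μ x = 1) →
      ∃ c > (0:ℝ), ∃ ε₂ > (0:ℝ), ∀ ε : ℝ, 0 < ε → ε < ε₂ →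
        |μ ⬝ᵥ (prodP (fun k => P k ε) (n ε) *ᵥ r) -
            (π ⬝ᵥ r -
              ε * (π ⬝ᵥ ((Pt1 * ((1 - Pt + Matrix.of fun _ y => π y)⁻¹) ^ 2 * Pt) *ᵥ r)) +
              ε ^ 2 * (π ⬝ᵥ ((Pt1 * ((1 - Pt + Matrix.of fun _ y => π y)⁻¹) ^ 2 * Pt1 *
                  ((1 - Pt + Matrix.of fun _ y => π y)⁻¹) ^ 2 * Pt) *ᵥ r)) +
              ε ^ 2 * (((1/2 : ℝ) • (π ᵥ* Pt2) +
                  π ᵥ* (Pt1 * (1 - Pt + Matrix.of fun _ y => π y)⁻¹ * Pt1)) ⬝ᵥ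
                  ((((2:ℝ) • ((1 - Pt + Matrix.of fun _ y => π y)⁻¹) ^ 3 -
                    ((1 - Pt + Matrix.of fun _ y => π y)⁻¹) ^ 2) * Pt) *ᵥ r)))|
          ≤ c * ε ^ 3 * (mcut n a ε : ℝ) ^ 4 := by
  intro μ r hμ0 hμ1
  obtain ⟨c, hc, ε₁, hε₁, happ⟩ := happrox
  obtain ⟨N, hN0, d, hd, hd2, hN⟩ := TE.pos_power hPt hirr
  obtain ⟨E, hE⟩ : ∃ E : Matrix S S ℝ, E = Matrix.of fun _ y => π y := ⟨_, rfl⟩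
  rw [← hE]
  obtain ⟨Z, hZ⟩ : ∃ Z : Matrix S S ℝ, Z = (1 - Pt + E)⁻¹ := ⟨_, rfl⟩
  rw [← hZ]
  obtain ⟨hEP, hPE, hZE, hZP, hPZ⟩ := TE.fundamental hPt hd hN hπ1 hπP hE hZ
  -- conversion of eventual statements
  have conv : ∀ K : ℝ, 0 ≤ K → ∃ ε₂ : ℝ, 0 < ε₂ ∧ ε₂ ≤ 1 ∧ ε₂ ≤ ε₀ ∧ ε₂ ≤ ε₁ ∧
      ∀ ε : ℝ, 0 < ε → ε < ε₂ →
      1 ≤ mcut n a ε ∧ K * Real.log (1/ε) ≤ mcut n a ε ∧ mcut n a ε + 1 ≤ n ε := by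
    intro K hK
    have h := TE.growth hn ha K hK
    rw [eventually_nhdsWithin_iff, Metric.eventually_nhds_iff] at h
    obtain ⟨η, hη, h⟩ := h
    refine ⟨min (min 1 ε₀) (min ε₁ η), by positivity, ?_, ?_, ?_, fun ε h0 h1 => ?_⟩
    · exact (min_le_left _ _).trans (min_le_left _ _)
    · exact (min_le_left _ _).trans (min_le_right _ _)
    · exact (min_le_right _ _).trans (min_le_left _ _)
    · refine h ?_ h0
      rw [Real.dist_eq, sub_zero, abs_of_pos h0]
      exact h1.trans_le ((min_le_right _ _).trans (min_le_right _ _))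
  have happ' : ∀ ε : ℝ, 0 < ε → ε < ε₁ → ∀ k : ℕ, k ≤ mcut n a ε →
      ‖P (n ε - k) ε - (Pt - (ε * k) • Pt1 + (ε ^ 2 / 2 * (k : ℝ) ^ 2) • Pt2)‖
          ≤ c * ε ^ 3 * (mcut n a ε : ℝ) ^ 3 :=
    fun ε h0 h1 k hk => (TE.norm_le_matNorm _).trans (happ ε h0 h1 k hk)
  by_cases hrow : ∀ x, ∑ y, Pt1 x y = 0 ∧ ∑ y, Pt2 x y = 0
  swap
  · obtain ⟨δ, hδ, hδm⟩ := TE.rowsum_alternative hPt hc hrow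
    obtain ⟨C, hC, hCb⟩ := TE.trivial_case (r := r) hμ0 hμ1 (π ⬝ᵥ r)
      (π ⬝ᵥ ((Pt1 * Z ^ 2 * Pt) *ᵥ r)) (π ⬝ᵥ ((Pt1 * Z ^ 2 * Pt1 * Z ^ 2 * Pt) *ᵥ r))
      (((1/2 : ℝ) • (π ᵥ* Pt2) + π ᵥ* (Pt1 * Z * Pt1)) ⬝ᵥ
        ((((2:ℝ) • Z ^ 3 - Z ^ 2) * Pt) *ᵥ r)) δ hδ
    obtain ⟨ε₂, hε₂, h21, h20, h2e, hg⟩ := conv 0 le_rfl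
    refine ⟨C, hC, ε₂, hε₂, fun ε h0 h1 => ?_⟩
    obtain ⟨hm1, _, hmn⟩ := hg ε h0 h1
    have hm1' : (1:ℝ) ≤ mcut n a ε := by exact_mod_cast hm1
    refine hCb ε _ _ h0 (by linarith) hm1'
      (TE.prodP_stoch fun k hk1 hk2 => hstoch ε h0 (by linarith) k hk1 hk2) ?_
    exact hδm ε _ _ h0 hm1' (hstoch ε h0 (by linarith) _ (by omega) (by omega))
      (happ' ε h0 (by linarith) _ le_rfl)
  have hP1E : Pt1 * E = 0 := by rw [hE]; exact TE.mul_E_eq_zero fun x => (hrow x).1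
  have hP2E : Pt2 * E = 0 := by rw [hE]; exact TE.mul_E_eq_zero fun x => (hrow x).2
  obtain ⟨al, be, ga, de, ze, i1, i2, i3, i4, i5, j1, j2, j3, j4, j5, hbe, hze⟩ :=
    TE.coeffs hPE hZE hZP hPZ hP1E hP2E
  obtain ⟨C, hC0, hC⟩ := TE.phi_bounds E Pt Pt1 Pt2 al be ga de ze hEP i1 i2 i3 i4 i5 c hc.le
  obtain ⟨K, hK0, hK⟩ := TE.geom_small hd hd2 hN0
  obtain ⟨L, hL⟩ : ∃ L, L = c + ‖Pt1‖ + ‖Pt2‖ := ⟨_, rfl⟩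
  have hL0 : 0 < L := by rw [hL]; positivity
  have hN' : (0:ℝ) < N := by exact_mod_cast hN0
  obtain ⟨δ, hδ⟩ : ∃ δ, δ = min 1 (d / (N * L)) := ⟨_, rfl⟩
  have hδ0 : 0 < δ := by rw [hδ]; positivity
  obtain ⟨C', hC', hCb⟩ := TE.trivial_case (r := r) hμ0 hμ1 (π ⬝ᵥ r)
      (π ⬝ᵥ ((Pt1 * Z ^ 2 * Pt) *ᵥ r)) (π ⬝ᵥ ((Pt1 * Z ^ 2 * Pt1 * Z ^ 2 * Pt) *ᵥ r))
      (((1/2 : ℝ) • (π ᵥ* Pt2) + π ᵥ* (Pt1 * Z * Pt1)) ⬝ᵥ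
        ((((2:ℝ) • Z ^ 3 - Z ^ 2) * Pt) *ᵥ r)) δ hδ0
  obtain ⟨b, hb⟩ : ∃ b : ℝ, b = ∑ x, |r x| := ⟨_, rfl⟩
  have hr : ∀ x, |r x| ≤ b := fun x => by
    rw [hb]
    exact Finset.single_le_sum (f := fun x => |r x|) (fun _ _ => abs_nonneg _) (Finset.mem_univ x)
  have hb0 : 0 ≤ b := by rw [hb]; exact Finset.sum_nonneg fun _ _ => abs_nonneg _
  have hosc : TE.Osc r (2 * b) := fun x y => by
    have h1 := (abs_le.1 (hr x)).2
    have h2 := (abs_le.1 (hr y)).1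
    linarith
  obtain ⟨ε₂, hε₂, h21, h20, h2e, hg⟩ := conv K hK0
  refine ⟨C' + 2 * C * b + (1 + C) * (4 * b), by positivity, ε₂, hε₂, fun ε h0 h1 => ?_⟩
  obtain ⟨hm1, hmK, hmn⟩ := hg ε h0 h1
  have happε := happ' ε h0 (by linarith)
  have hst : ∀ k : ℕ, 1 ≤ k → k ≤ n ε → IsStochastic (P k ε) := hstoch ε h0 (by linarith)
  have hgeo := hK ε _ h0 hmK
  obtain ⟨m, hm⟩ : ∃ m, m = mcut n a ε := ⟨_, rfl⟩
  rw [← hm] at hm1 hmK hmn happε hgeo ⊢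
  have hm1' : (1:ℝ) ≤ m := by exact_mod_cast hm1
  have hbase : 0 ≤ ε^3 * (m:ℝ)^4 := by positivity
  by_cases hcase : δ ≤ ε * m
  · have h2 := hCb ε m _ h0 (by linarith) hm1' (TE.prodP_stoch hst) hcase
    refine h2.trans ?_
    have : 0 ≤ (2 * C * b + (1 + C) * (4 * b)) * (ε^3 * (m:ℝ)^4) := by positivity
    linarith
  have hcase : ε * m < δ := not_le.1 hcase
  have hεm : ε * m ≤ 1 := hcase.le.trans (hδ ▸ min_le_left _ _)
  have hεm2 : ε * m ≤ d / (N * L) := hcase.le.trans (hδ ▸ min_le_right _ _)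
  obtain ⟨Q, hQ⟩ : ∃ Q : ℕ → Matrix S S ℝ, Q = fun k => P (n ε - k) ε := ⟨_, rfl⟩
  have hQs : ∀ i, i < m + 1 → IsStochastic (Q i) := fun i hi => by
    rw [hQ]; exact hst _ (by omega) (by omega)
  have hQc : ∀ i, i < m + 1 → ‖Q i - Pt‖ ≤ ε * m * L := fun i hi => by
    rw [hL]
    have hi' : (i:ℝ) ≤ m := by exact_mod_cast Nat.lt_succ_iff.1 hi
    refine TE.close_bound hc h0 hm1' hεm (Nat.cast_nonneg i) hi' ?_
    rw [hQ]; exact happε i (by omega)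
  have hNη : N * (ε * m * L) ≤ d := by
    rw [le_div_iff₀ (by positivity)] at hεm2
    linarith
  have hoscF := TE.bprod_osc hPt hd.le hN hNη hQs hQc hosc
  obtain ⟨Φ, hΦ⟩ : ∃ Φ : ℕ → Matrix S S ℝ, Φ = fun k : ℕ =>
    E + ε • ((k:ℝ) • al + be) + ε^2 • ((k:ℝ)^2 • ga + (k:ℝ) • de + ze) := ⟨_, rfl⟩
  have htel : ‖Φ (m+1) * TE.bprod Q 0 (m+1) - Φ 0‖ ≤ ((m + 1 : ℕ) : ℝ) * (C * (ε^3 * (m:ℝ)^3)) := by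
    refine TE.telescope hQs fun i hi => ?_
    have hi' : (i:ℝ) ≤ m := by exact_mod_cast Nat.lt_succ_iff.1 hi
    have := (hC ε m i h0 hm1' hεm (Nat.cast_nonneg i) hi').2 (Q i)
      (by rw [hQ]; exact happε i (by omega))
    rw [hΦ]; push_cast
    exact this
  have hΦn : ‖Φ (m+1)‖ ≤ C := by
    have := (hC ε m m h0 hm1' hεm (Nat.cast_nonneg m) le_rfl).1
    rw [hΦ]; push_cast
    exact this
  have hΦ1 : ∀ x, ∑ y, Φ (m+1) x y = 1 := fun x => by
    rw [hΦ]
    exact TE.phi_rowsum hπ1 hE j1 j2 j3 j4 j5 ε ((m+1 : ℕ) : ℝ) x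
  obtain ⟨x0⟩ := ‹Nonempty S›
  have hT := TE.target_eq π r (Pt1 * Z ^ 2 * Pt) (Pt1 * Z ^ 2 * Pt1 * Z ^ 2 * Pt) Pt2
    (Pt1 * Z * Pt1) (((2:ℝ) • Z ^ 3 - Z ^ 2) * Pt) ε x0 hE
  rw [← hbe, ← hze] at hT
  have hΦ0 : Φ 0 = E + ε • be + ε^2 • ze := by rw [hΦ]; simp
  rw [← hΦ0] at hT
  rw [← hT]
  rw [TE.prodP_split (fun k => P k ε) (n ε) (m+1) hmn, ← hQ, ← Matrix.mulVec_mulVec,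
    Matrix.dotProduct_mulVec]
  obtain ⟨hν0, hν1⟩ := TE.vecMul_prob hμ0 hμ1 (TE.prodP_stoch (P := fun k => P k ε)
    (n := n ε - (m+1)) fun k hk1 hk2 => hst k hk1 (by omega))
  have hcmp := TE.compare hΦ1 hν0 hν1 hoscF x0
  rw [Matrix.mulVec_mulVec] at hcmp
  have hdiff := TE.mulVec_abs_le (Φ (m+1) * TE.bprod Q 0 (m+1) - Φ 0) r hr x0
  rw [Matrix.sub_mulVec, Pi.sub_apply] at hdiff
  refine (abs_sub_le _ (((Φ (m+1) * TE.bprod Q 0 (m+1)) *ᵥ r) x0) _).trans ?_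
  have hd1 : 0 ≤ (1 - d) ^ ((m+1)/N) := pow_nonneg (by linarith) _
  have hm4 : (1:ℝ) ≤ (m:ℝ)^4 := one_le_pow₀ hm1'
  have b1 : (1 + ‖Φ (m+1)‖) * ((1 - d) ^ ((m+1)/N) * (2 * b)) ≤ (1 + C) * (4 * b) * (ε^3 * (m:ℝ)^4) := by
    calc _ ≤ (1 + C) * ((2 * ε^3) * (2 * b)) := by gcongr
      _ = (1 + C) * (4 * b) * (ε^3 * 1) := by ring
      _ ≤ _ := by gcongr
  have b2 : ‖Φ (m+1) * TE.bprod Q 0 (m+1) - Φ 0‖ * b ≤ 2 * C * b * (ε^3 * (m:ℝ)^4) := by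
    calc _ ≤ ((m + 1 : ℕ) : ℝ) * (C * (ε^3 * (m:ℝ)^3)) * b := by gcongr
      _ ≤ (2 * m) * (C * (ε^3 * (m:ℝ)^3)) * b := by gcongr; push_cast; linarith
      _ = _ := by ring
  have b3 : 0 ≤ C' * (ε^3 * (m:ℝ)^4) := by positivity
  linarith [hcmp.trans b1, hdiff.trans b2]

end
end
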